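/- arXiv:1310.5094 — 10 statements merged into one kernel-verified Lean document; each statement's English description precedes it below -/
import Mathlib

section
/- Let B be a symmetric transition matrix whose transition graph is connected, let v¹,…,vⁿ ∈ ℝ^d, and assume span{v^i − v^j : i,j = 1,…,n} = ℝ^d. Let A_ℓ (ℓ = 1,…,d) be the diagonal n×n matrix with entries (A_ℓ)_{ii} = (v^i)_ℓ. Then for every nonzero F ∈ ker B, every λ ∈ ℝ, and every k = (k_1,…,k_d) ∈ ℝ^d with k ≠ 0, one has λ F + ∑_{ℓ=1}^d k_ℓ A_ℓ F ≠ 0. -/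
/-!
The kernel of `B` consists of constant vectors, by the discrete maximum principle: row `i` of
`B F = 0` reads `∑_{j≠i} μ_{ij} (F_i - F_j) = 0`, so where `F` is maximal each summand is
nonnegative and `F` takes the same value at every neighbour; connectedness spreads this value to
the whole graph (`transMatrix_ker_const`). For a nonzero constant `F`, the equation
`λ F + ∑_ℓ k_ℓ A_ℓ F = 0` says that `λ + k ⬝ v^i = 0` for every `i`, so `k` is orthogonal to every
`v^i - v^j`. These differences span `ℝ^d`, hence `k ⬝ k = 0` and `k = 0`.
-/

/-- The transition matrix `B` with entries `B_{ij} = −μ_{ij}` for `i ≠ j` and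
`B_{ii} = ∑_{j≠i} μ_{ji}`. -/
noncomputable def transMatrix {n : ℕ} (μ : Fin n → Fin n → ℝ) : Matrix (Fin n) (Fin n) ℝ :=
  Matrix.of fun i j => if i = j then ∑ k ∈ Finset.univ.erase i, μ k i else -μ i j

/-- The transition graph: vertices `{1,…,n}`, with an edge `{i,j}` exactly when `μ_{ij} > 0`. -/
def transGraph {n : ℕ} (μ : Fin n → Fin n → ℝ) : SimpleGraph (Fin n) :=
  SimpleGraph.fromRel (fun i j => 0 < μ i j)

theorem transMatrix_mulVec_apply {n : ℕ} (μ : Fin n → Fin n → ℝ)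
    (hsym : ∀ i j : Fin n, i ≠ j → μ i j = μ j i) (F : Fin n → ℝ) (i : Fin n) :
    (transMatrix μ).mulVec F i = ∑ j ∈ Finset.univ.erase i, μ i j * (F i - F j) := by
  rw [Matrix.mulVec, dotProduct, ← Finset.add_sum_erase _ _ (Finset.mem_univ i)]
  simp only [transMatrix, Matrix.of_apply, if_true]
  rw [Finset.sum_mul, ← Finset.sum_add_distrib]
  refine Finset.sum_congr rfl fun j hj => ?_
  have hji : j ≠ i := Finset.ne_of_mem_erase hj
  rw [if_neg hji.symm, hsym j i hji]
  ring

theorem transMatrix_ker_const {n : ℕ} (μ : Fin n → Fin n → ℝ)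
    (hnonneg : ∀ i j : Fin n, i ≠ j → 0 ≤ μ i j)
    (hsym : ∀ i j : Fin n, i ≠ j → μ i j = μ j i)
    (hconn : (transGraph μ).Connected) (F : Fin n → ℝ)
    (hF : (transMatrix μ).mulVec F = 0) : ∃ c, ∀ i, F i = c := by
  have := hconn.nonempty
  obtain ⟨m, hm⟩ := Finite.exists_max F
  have step : ∀ i j, (transGraph μ).Adj i j → F i = F m → F j = F m := by
    intro i j hij hi
    obtain ⟨hne, hpos⟩ := (SimpleGraph.fromRel_adj _ _ _).1 hij
    have hμ : 0 < μ i j := hpos.elim id fun h => (hsym i j hne).symm ▸ h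
    have hrow := congrFun hF i
    rw [transMatrix_mulVec_apply μ hsym, Pi.zero_apply, Finset.sum_eq_zero_iff_of_nonneg] at hrow
    · have h := hrow j (Finset.mem_erase.2 ⟨hne.symm, Finset.mem_univ j⟩)
      rcases mul_eq_zero.1 h with h | h <;> linarith
    · intro l hl
      exact mul_nonneg (hnonneg i l (Finset.ne_of_mem_erase hl).symm) (by linarith [hm l])
  refine ⟨F m, fun i => ?_⟩
  obtain ⟨w⟩ := hconn.preconnected m i
  have walk : ∀ {a b} (_ : (transGraph μ).Walk a b), F a = F m → F b = F m := by
    intro a b p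
    induction p with
    | nil => exact id
    | cons h _ ih => exact fun ha => ih (step _ _ h ha)
  exact walk w rfl

/-- Shizuta–Kawashima condition: if the symmetric transition matrix `B` has
connected transition graph and `span{v^i − v^j} = ℝ^d`, then for every nonzero `F ∈ ker B`,
every `λ ∈ ℝ` and every `k ≠ 0`, one has `λ F + ∑_ℓ k_ℓ A_ℓ F ≠ 0`, where
`A_ℓ = diag((v^1)_ℓ, …, (v^n)_ℓ)`. -/
theorem shizuta_kawashima (n d : ℕ) (hn : 2 ≤ n) (μ : Fin n → Fin n → ℝ)
    (hnonneg : ∀ i j : Fin n, i ≠ j → 0 ≤ μ i j)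
    (hsym : ∀ i j : Fin n, i ≠ j → μ i j = μ j i)
    (hconn : (transGraph μ).Connected)
    (v : Fin n → Fin d → ℝ)
    (hspan : Submodule.span ℝ {x : Fin d → ℝ | ∃ i j : Fin n, x = v i - v j} = ⊤) :
    ∀ F : Fin n → ℝ, F ∈ LinearMap.ker (Matrix.mulVecLin (transMatrix μ)) → F ≠ 0 →
      ∀ (lam : ℝ) (k : Fin d → ℝ), k ≠ 0 →
        lam • F + ∑ l : Fin d, k l • (Matrix.diagonal (fun i => v i l)).mulVec F ≠ 0 := by
  intro F hF hF0 lam k hk h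
  rw [LinearMap.mem_ker, Matrix.mulVecLin_apply] at hF
  obtain ⟨c, hc⟩ := transMatrix_ker_const μ hnonneg hsym hconn F hF
  have hc0 : c ≠ 0 := by
    rintro rfl
    exact hF0 (funext hc)
  have hv : ∀ i, lam + k ⬝ᵥ v i = 0 := by
    intro i
    have hi := congrFun h i
    simp only [Pi.add_apply, Pi.smul_apply, Finset.sum_apply, Matrix.mulVec_diagonal, hc,
      smul_eq_mul, Pi.zero_apply, ← mul_assoc, ← Finset.sum_mul, ← add_mul] at hi
    exact (mul_eq_zero.1 hi).resolve_right hc0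
  have horth : ∀ x : Fin d → ℝ, k ⬝ᵥ x = 0 := by
    intro x
    have hx : x ∈ Submodule.span ℝ {x : Fin d → ℝ | ∃ i j : Fin n, x = v i - v j} :=
      hspan ▸ Submodule.mem_top
    induction hx using Submodule.span_induction with
    | mem x hx =>
      obtain ⟨i, j, rfl⟩ := hx
      rw [dotProduct_sub]
      linarith [hv i, hv j]
    | zero => exact dotProduct_zero k
    | add x y _ _ hx hy => rw [dotProduct_add, hx, hy, add_zero]
    | smul a x _ hx => rw [dotProduct_smul, hx, smul_zero]
  exact hk (dotProduct_self_eq_zero.1 (horth k))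
end

section
/- Let B be a symmetric transition matrix with I₁(B) ≠ 0 and let v¹,…,vⁿ ∈ ℝ^d. Then the drift velocity v_drift := (1/I₁(B)) ∑_{i=1}^n det B(i) · v^i equals the arithmetic average of the speeds: v_drift = (1/n) ∑_{i=1}^n v^i. -/
/-- `pminor B S` is the principal minor `det B(S)` of `B`, obtained by deleting the rows
and columns with indices in `S`. -/
noncomputable def pminor {n : ℕ} (B : Matrix (Fin n) (Fin n) ℝ) (S : Finset (Fin n)) : ℝ :=
  Matrix.det (B.submatrix (fun i : {i : Fin n // i ∉ S} => (i : Fin n))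
    (fun j : {j : Fin n // j ∉ S} => (j : Fin n)))

/-- `I₁(B) = ∑_i det B(i)`. -/
noncomputable def I1 {n : ℕ} (B : Matrix (Fin n) (Fin n) ℝ) : ℝ := ∑ i : Fin n, pminor B {i}

/-- If every row of `B` sums to zero, each column of its adjugate is constant: the difference of two
entries in column `j` is the determinant of `B` with row `j` replaced by `e_i - e_k`, and that
matrix annihilates the all-ones vector. -/
theorem adjugate_eq_of_rowSum_zero {n : ℕ} (B : Matrix (Fin n) (Fin n) ℝ)
    (hB : ∀ i, ∑ j, B i j = 0) (i k j : Fin n) : B.adjugate i j = B.adjugate k j := by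
  have h0 : (B.updateRow j (Pi.single i 1 + (-1 : ℝ) • Pi.single k 1)).det = 0 := by
    rw [← Matrix.exists_mulVec_eq_zero_iff]
    refine ⟨fun _ => 1, fun h => one_ne_zero (congrFun h i), ?_⟩
    funext r
    by_cases hr : r = j
    · subst hr
      simp [Matrix.mulVec, dotProduct, Finset.sum_add_distrib]
    · simp [Matrix.mulVec, dotProduct, Matrix.updateRow_ne hr, hB]
  rw [Matrix.det_updateRow_add, Matrix.det_updateRow_smul] at h0
  rw [Matrix.adjugate_apply, Matrix.adjugate_apply]
  linarith

theorem pminor_singleton_eq_adjugate {n : ℕ} (B : Matrix (Fin n) (Fin n) ℝ) (i : Fin n) :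
    pminor B {i} = B.adjugate i i := by
  cases n with
  | zero => exact i.elim0
  | succ m =>
    rw [Matrix.adjugate_fin_succ_eq_det_submatrix, Even.neg_one_pow ⟨_, rfl⟩, one_mul]
    let e : Fin m ≃ {x : Fin (m + 1) // x ∉ ({i} : Finset (Fin (m + 1)))} :=
      (finSuccAboveEquiv i).trans (Equiv.subtypeEquivRight (by simp))
    rw [pminor, ← Matrix.det_submatrix_equiv_self e]
    rfl

theorem transMatrix_isSymm {n : ℕ} (μ : Fin n → Fin n → ℝ)
    (hsym : ∀ i j : Fin n, i ≠ j → μ i j = μ j i) : (transMatrix μ).IsSymm := by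
  ext i j
  by_cases h : i = j
  · subst h; rfl
  · simp [transMatrix, h, Ne.symm h, hsym i j h]

theorem transMatrix_rowSum {n : ℕ} (μ : Fin n → Fin n → ℝ)
    (hsym : ∀ i j : Fin n, i ≠ j → μ i j = μ j i) (i : Fin n) :
    ∑ j, transMatrix μ i j = 0 := by
  rw [← Finset.add_sum_erase _ _ (Finset.mem_univ i)]
  have h : ∀ j ∈ Finset.univ.erase i, transMatrix μ i j = -μ j i := fun j hj => by
    have hij : i ≠ j := (Finset.ne_of_mem_erase hj).symm
    simp [transMatrix, hij, hsym i j hij]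
  rw [Finset.sum_congr rfl h]
  simp [transMatrix]

/-- for a symmetric transition matrix `B` with `I₁(B) ≠ 0`, the drift velocity
`v_drift = (1/I₁(B)) ∑_i det B(i) v^i` is the arithmetic average `(1/n) ∑_i v^i`. -/
theorem drift_eq_average (n d : ℕ) (hn : 2 ≤ n) (μ : Fin n → Fin n → ℝ)
    (hnonneg : ∀ i j : Fin n, i ≠ j → 0 ≤ μ i j)
    (hsym : ∀ i j : Fin n, i ≠ j → μ i j = μ j i)
    (hI1 : I1 (transMatrix μ) ≠ 0)
    (v : Fin n → Fin d → ℝ) :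
    (1 / I1 (transMatrix μ)) • ∑ i : Fin n, pminor (transMatrix μ) {i} • v i
      = ((1 : ℝ) / n) • ∑ i : Fin n, v i := by
  have hc : ∀ i, pminor (transMatrix μ) {i} = pminor (transMatrix μ) {⟨0, by omega⟩} := by
    intro i
    simp only [pminor_singleton_eq_adjugate]
    have hadj := adjugate_eq_of_rowSum_zero _ (transMatrix_rowSum μ hsym)
    -- columns of the adjugate are constant; by symmetry so are its rows
    rw [hadj i ⟨0, by omega⟩ i, ← (transMatrix_isSymm μ hsym).adjugate.apply]
    exact hadj _ _ _
  generalize pminor (transMatrix μ) {⟨0, by omega⟩} = c at hc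
  have hI : I1 (transMatrix μ) = n * c := by simp [I1, hc]
  rw [hI] at hI1 ⊢
  have hc0 : c ≠ 0 := right_ne_zero_of_mul hI1
  simp only [hc, ← Finset.smul_sum, smul_smul]
  congr 1
  field_simp
end

section
/- Let B be a real singular n×n matrix with I₁(B) := ∑_{i=1}^n det B(i) ≠ 0, let v¹,…,vⁿ ∈ ℝ^d, and let p(λ,k) := det(λ·Id + diag(v^i·k) + B) for λ ∈ ℝ, k ∈ ℝ^d, where diag(v^i·k) is the diagonal matrix with entries v^i·k. Then there exist a neighborhood U of 0 in ℝ^d, a neighborhood V of 0 in ℝ, and a smooth function λ : U → V with λ(0) = 0 such that for (λ₀,k) ∈ V × U one has p(λ₀,k) = 0 if and only if λ₀ = λ(k); moreover ∂λ/∂k_ℓ(0) = −(1/I₁(B)) ∑_{i=1}^n (v^i)_ℓ · det B(i) for every ℓ = 1,…,d. -/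
/-- The dispersion polynomial `p(λ,k) = det(λ Id + diag(v^i·k) + B)`. -/
noncomputable def dispersion {n d : ℕ} (B : Matrix (Fin n) (Fin n) ℝ) (v : Fin n → Fin d → ℝ)
    (lam : ℝ) (k : Fin d → ℝ) : ℝ :=
  Matrix.det (lam • (1 : Matrix (Fin n) (Fin n) ℝ)
    + Matrix.diagonal (fun i => ∑ l : Fin d, v i l * k l) + B)

/-- The determinant as a continuous multilinear map of the rows. -/
noncomputable def detCM (n : ℕ) : ContinuousMultilinearMap ℝ (fun _ : Fin n => Fin n → ℝ) ℝ where
  toMultilinearMap := (Matrix.detRowAlternating (n := Fin n) (R := ℝ)).toMultilinearMap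
  cont := (continuous_id.matrix_det :
    Continuous fun M : Matrix (Fin n) (Fin n) ℝ => M.det)

/-- The diagonal entry `λ + vⁱ·k` of the perturbation, as a linear form in `(k, λ)`. -/
noncomputable def entryCLM {n d : ℕ} (v : Fin n → Fin d → ℝ) (i : Fin n) :
    ((Fin d → ℝ) × ℝ) →L[ℝ] ℝ :=
  ContinuousLinearMap.snd ℝ _ _ +
    ∑ l : Fin d, v i l • (ContinuousLinearMap.proj l ∘L ContinuousLinearMap.fst ℝ (Fin d → ℝ) ℝ)

lemma entryCLM_apply {n d : ℕ} (v : Fin n → Fin d → ℝ) (i : Fin n) (x : (Fin d → ℝ) × ℝ) :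
    entryCLM v i x = x.2 + ∑ l, v i l * x.1 l := by
  simp [entryCLM]

/-- The diagonal matrix `λ Id + diag(vⁱ·k)`, as a linear function of `(k, λ)`, given by rows. -/
noncomputable def pertCLM {n d : ℕ} (v : Fin n → Fin d → ℝ) :
    ((Fin d → ℝ) × ℝ) →L[ℝ] (Fin n → Fin n → ℝ) :=
  ContinuousLinearMap.pi fun i =>
    ContinuousLinearMap.single ℝ (fun _ : Fin n => ℝ) i ∘L entryCLM v i

lemma pertCLM_apply {n d : ℕ} (v : Fin n → Fin d → ℝ) (x : (Fin d → ℝ) × ℝ) (i : Fin n) :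
    pertCLM v x i = Pi.single i (entryCLM v i x) := by
  simp [pertCLM]

lemma dispersion_eq {n d : ℕ} (B : Matrix (Fin n) (Fin n) ℝ) (v : Fin n → Fin d → ℝ)
    (x : (Fin d → ℝ) × ℝ) :
    dispersion B v x.2 x.1 = detCM n (pertCLM v x + Matrix.of.symm B) := by
  change _ = Matrix.det (pertCLM v x + Matrix.of.symm B)
  unfold dispersion
  congr 2
  ext i j
  rw [pertCLM_apply, entryCLM_apply]
  by_cases h : i = j
  · subst h; simp
  · simp [h]

/-- The diagonal cofactors of `B` are the principal minors `det B(i)`. -/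
lemma det_updateRow_single_eq_pminor {n : ℕ} (B : Matrix (Fin n) (Fin n) ℝ) (i : Fin n) :
    (B.updateRow i (Pi.single i 1)).det = pminor B {i} := by
  cases n with
  | zero => exact i.elim0
  | succ m =>
    rw [← Matrix.adjugate_apply, Matrix.adjugate_fin_succ_eq_det_submatrix]
    have hsign : ((-1 : ℝ)) ^ ((i : ℕ) + (i : ℕ)) = 1 := Even.neg_one_pow ⟨_, rfl⟩
    rw [hsign, one_mul, pminor]
    let e : Fin m ≃ {j : Fin (m + 1) // j ∉ ({i} : Finset (Fin (m + 1)))} :=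
      (finSuccAboveEquiv i).trans
        (Equiv.subtypeEquivRight fun j => by simp)
    rw [← Matrix.det_submatrix_equiv_self e]
    rfl

lemma linearDeriv_detCM {n d : ℕ} (B : Matrix (Fin n) (Fin n) ℝ) (v : Fin n → Fin d → ℝ)
    (x : (Fin d → ℝ) × ℝ) :
    (detCM n).linearDeriv (Matrix.of.symm B) (pertCLM v x) = ∑ i, entryCLM v i x * pminor B {i} := by
  rw [ContinuousMultilinearMap.linearDeriv_apply]
  refine Finset.sum_congr rfl fun i _ => ?_
  rw [pertCLM_apply, ← det_updateRow_single_eq_pminor, ← Matrix.det_updateRow_smul]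
  have h : (Pi.single i (entryCLM v i x) : Fin n → ℝ)
      = entryCLM v i x • (Pi.single i 1 : Fin n → ℝ) := by
    rw [← Pi.single_smul, smul_eq_mul, mul_one]
  rw [h]
  rfl

open scoped ContDiff Topology

/-- if `B` is singular with `I₁(B) ≠ 0`, the dispersion relation `p(λ,k) = 0`
defines near the origin a smooth branch `λ = λ(k)` with `λ(0) = 0`, whose first derivatives
at the origin are `∂λ/∂k_ℓ(0) = −(1/I₁(B)) ∑_i (v^i)_ℓ det B(i)`. -/
theorem dispersion_branch_first_order (n d : ℕ) (B : Matrix (Fin n) (Fin n) ℝ)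
    (hsing : B.det = 0) (hI1 : I1 B ≠ 0) (v : Fin n → Fin d → ℝ) :
    ∃ U ∈ nhds (0 : Fin d → ℝ), ∃ V ∈ nhds (0 : ℝ), ∃ lam : (Fin d → ℝ) → ℝ,
      ContDiffOn ℝ (⊤ : ℕ∞) lam U ∧ lam 0 = 0 ∧ (∀ k ∈ U, lam k ∈ V) ∧
      (∀ lam₀ ∈ V, ∀ k ∈ U, (dispersion B v lam₀ k = 0 ↔ lam₀ = lam k)) ∧
      (∀ l : Fin d, fderiv ℝ lam 0 (Pi.single l 1)
          = -(1 / I1 B) * ∑ i : Fin n, v i l * pminor B {i}) := by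
  set p : (Fin d → ℝ) × ℝ → ℝ := fun x => dispersion B v x.2 x.1 with hp
  have hp_eq : p = fun x => detCM n (pertCLM v x + Matrix.of.symm B) :=
    funext (dispersion_eq B v)
  have hp0 : p 0 = 0 := by
    rw [hp_eq]
    simp only [map_zero, zero_add]
    exact hsing
  have hpC : ContDiffAt ℝ ω p (0, 0) := by
    rw [hp_eq]
    exact ((detCM n).contDiff.comp ((pertCLM v).contDiff.add contDiff_const)).contDiffAt
  have hpD : fderiv ℝ p (0, 0) = (detCM n).linearDeriv (Matrix.of.symm B) ∘L pertCLM v := by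
    rw [hp_eq]
    have h1 : HasFDerivAt (fun x => pertCLM v x + Matrix.of.symm B) (pertCLM v)
        ((0, 0) : (Fin d → ℝ) × ℝ) := (pertCLM v).hasFDerivAt.add_const _
    have h2 := (detCM n).hasFDerivAt (pertCLM v ((0, 0) : (Fin d → ℝ) × ℝ) + Matrix.of.symm B)
    have h3 := (HasFDerivAt.comp ((0, 0) : (Fin d → ℝ) × ℝ) h2 h1).fderiv
    have h0 : pertCLM v ((0, 0) : (Fin d → ℝ) × ℝ) + Matrix.of.symm B = Matrix.of.symm B := by
      rw [Prod.mk_zero_zero, map_zero, zero_add]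
    rw [h0] at h3
    exact h3
  have hD (x) : fderiv ℝ p (0, 0) x = ∑ i, entryCLM v i x * pminor B {i} := by
    rw [hpD]
    exact linearDeriv_detCM B v x
  have hinr (y : ℝ) :
      (fderiv ℝ p (0, 0) ∘L ContinuousLinearMap.inr ℝ (Fin d → ℝ) ℝ) y = I1 B * y := by
    rw [ContinuousLinearMap.comp_apply, hD, I1, Finset.sum_mul]
    refine Finset.sum_congr rfl fun i _ => ?_
    simp [entryCLM_apply, mul_comm]
  have hinv : (fderiv ℝ p (0, 0) ∘L ContinuousLinearMap.inr ℝ (Fin d → ℝ) ℝ).IsInvertible := by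
    refine ⟨ContinuousLinearEquiv.unitsEquivAut ℝ (Units.mk0 _ hI1), ?_⟩
    ext
    rw [hinr]
    simp
  have hne : (ω : ℕ∞ω) ≠ 0 := by simp
  set ψ := hpC.implicitFunction hne hinv with hψ
  have hψ0 : ψ 0 = 0 := hpC.implicitFunction_apply_self hne hinv
  have hψC : ContDiffAt ℝ ω ψ 0 := hpC.contDiffAt_implicitFunction hne hinv
  have hψD := (hpC.hasStrictFDerivAt_implicitFunction hne hinv).hasFDerivAt.fderiv
  have hiff := hpC.eventually_apply_eq_iff_implicitFunction hne hinv
  rw [nhds_prod_eq] at hiff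
  obtain ⟨U₀, hU₀, V, hV, hUV⟩ := Filter.mem_prod_iff.mp hiff
  have hψV : ∀ᶠ k in 𝓝 (0 : Fin d → ℝ), ψ k ∈ V :=
    hψC.continuousAt.eventually_mem (by rwa [hψ0])
  refine ⟨U₀ ∩ {k | ψ k ∈ V ∧ ContDiffAt ℝ ω ψ k},
    Filter.inter_mem hU₀ (hψV.and (hψC.eventually (by simp))), V, hV, ψ,
    fun k hk => (hk.2.2.of_le le_top).contDiffWithinAt, hψ0, fun k hk => hk.2.1, ?_, ?_⟩
  · intro lam₀ hlam k hk
    have h : p (k, lam₀) = p (0, 0) ↔ ψ k = lam₀ := hUV (Set.mk_mem_prod hk.1 hlam)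
    rw [Prod.mk_zero_zero, hp0] at h
    exact h.trans eq_comm
  · intro l
    change fderiv ℝ ψ 0 = _ at hψD
    -- Multiplying by `∂p/∂λ = I₁(B)` removes the abstract inverse from the derivative formula.
    have key : I1 B * fderiv ℝ ψ 0 (Pi.single l 1)
        = -fderiv ℝ p (0, 0) (Pi.single l 1, 0) := by
      rw [← hinr, hψD]
      simp [-ContinuousLinearMap.comp_apply, ContinuousLinearMap.coe_comp, map_neg, hinv]
    have hl : fderiv ℝ p (0, 0) (Pi.single l 1, 0) = ∑ i, v i l * pminor B {i} := by
      rw [hD]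
      simp [entryCLM_apply, Pi.single_apply]
    rw [hl] at key
    field_simp
    linarith
end

section
/- Let B be a real singular n×n matrix with I₁(B) := ∑_{i=1}^n det B(i) ≠ 0, let v¹,…,vⁿ ∈ ℝ^d, let p(λ,k) := det(λ·Id + diag(v^i·k) + B), and let λ : U → ℝ be the smooth function defined near k = 0 with λ(0) = 0 and p(λ(k),k) = 0. If the gradient ∇_k λ(0) = 0, then the second derivatives at the origin satisfy ∂²λ/∂k_j ∂k_ℓ (0) = −(1/I₁(B)) ∑_{h ≠ m} (v^h)_j (v^m)_ℓ · det B(h,m), where the sum runs over ordered pairs of distinct indices h,m ∈ {1,…,n}. -/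
/-- The matrix `diag(x) + B` with each row `i ∈ T` replaced by the `i`-th row of the identity. -/
def frozenRows {n : ℕ} (B : Matrix (Fin n) (Fin n) ℝ) (T : Finset (Fin n)) (x : Fin n → ℝ) :
    Matrix (Fin n) (Fin n) ℝ :=
  fun i => if i ∈ T then Pi.single i 1 else x i • Pi.single i 1 + B i

/-- Ordering the indices outside `T` first makes the matrix block triangular, with blocks `B(T)`
and the identity. -/
theorem det_frozenRows_zero {n : ℕ} (B : Matrix (Fin n) (Fin n) ℝ) (T : Finset (Fin n)) :
    (frozenRows B T 0).det = pminor B T := by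
  rw [Matrix.twoBlockTriangular_det _ (fun i => i ∉ T)]
  · have h1 : Matrix.toSquareBlockProp (frozenRows B T 0) (fun i => ¬ i ∉ T) = 1 := by
      ext ⟨i, hi⟩ ⟨j, hj⟩
      have hi' : i ∈ T := not_not.mp hi
      simp [Matrix.toSquareBlockProp, frozenRows, hi', Matrix.one_apply, Pi.single_apply, eq_comm]
    rw [h1, Matrix.det_one, mul_one]
    unfold pminor
    congr 1
    ext ⟨i, hi⟩ ⟨j, hj⟩
    simp [Matrix.toSquareBlockProp, frozenRows, hi]
  · intro i hi j hj
    have hi' : i ∈ T := not_not.mp hi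
    have hij : j ≠ i := by rintro rfl; exact hj hi'
    simp [frozenRows, hi', hij]

theorem dispersion_eq_det_frozenRows {n d : ℕ} (B : Matrix (Fin n) (Fin n) ℝ)
    (v : Fin n → Fin d → ℝ) (lam : ℝ) (k : Fin d → ℝ) :
    dispersion B v lam k = (frozenRows B ∅ (fun i => lam + ∑ l, v i l * k l)).det := by
  unfold dispersion
  congr 1
  ext i j
  by_cases hij : i = j
  · subst hij; simp [frozenRows]
  · simp [frozenRows, hij, Ne.symm hij]

/-- Updating row `i` of the frozen matrix to the `i`-th unit vector freezes it as well. -/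
theorem update_frozenRows {n : ℕ} (B : Matrix (Fin n) (Fin n) ℝ) (T : Finset (Fin n))
    (x : Fin n → ℝ) (i : Fin n) :
    (frozenRows B T x).updateRow i (Pi.single i 1) = frozenRows B (insert i T) x := by
  funext j
  by_cases hj : j = i
  · subst hj
    ext c
    simp [frozenRows]
  · ext c
    simp [frozenRows, hj]

/-- The chain rule for `G_T(x(k))`, with `∂G_T/∂x_i = G_{T ∪ {i}}` for `i ∉ T`. -/
theorem hasFDerivAt_det_frozenRows {n : ℕ} (B : Matrix (Fin n) (Fin n) ℝ) (T : Finset (Fin n))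
    {E : Type*} [NormedAddCommGroup E] [NormedSpace ℝ E] {x : E → Fin n → ℝ}
    {x' : Fin n → E →L[ℝ] ℝ} {k : E} (hx : ∀ i, HasFDerivAt (fun k => x k i) (x' i) k) :
    HasFDerivAt (fun k => (frozenRows B T (x k)).det)
      (∑ i ∈ Finset.univ \ T, (frozenRows B (insert i T) (x k)).det • x' i) k := by
  let D : ContinuousMultilinearMap ℝ (fun _ : Fin n => Fin n → ℝ) ℝ :=
    { toMultilinearMap := (Matrix.detRowAlternating : (Fin n → ℝ) [⋀^Fin n]→ₗ[ℝ] ℝ).toMultilinearMap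
      cont := Continuous.matrix_det continuous_id }
  have hg : ∀ i, HasFDerivAt (fun k => frozenRows B T (x k) i)
      (if i ∈ T then 0 else (x' i).smulRight (Pi.single i 1 : Fin n → ℝ)) k := by
    intro i
    by_cases hi : i ∈ T
    · simp only [frozenRows, hi, if_true]
      exact hasFDerivAt_const (Pi.single i 1 : Fin n → ℝ) k
    · simp only [frozenRows, hi, if_false]
      exact ((hx i).smul_const (Pi.single i 1 : Fin n → ℝ)).add_const (B i)
  refine (HasFDerivAt.multilinear_comp (f := D) hg).congr_fderiv ?_
  ext w
  have hterm : ∀ i, (D.toContinuousLinearMap (fun j => frozenRows B T (x k) j) i)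
      ((if i ∈ T then 0 else (x' i).smulRight (Pi.single i 1 : Fin n → ℝ)) w)
      = if i ∈ T then 0 else (frozenRows B (insert i T) (x k)).det * x' i w := by
    intro i
    by_cases hi : i ∈ T
    · simp only [hi, if_true, zero_apply, map_zero]
    · simp only [hi, if_false, ContinuousLinearMap.smulRight_apply, map_smul, smul_eq_mul]
      rw [mul_comm, ← update_frozenRows]
      rfl
  simp only [sum_apply, ContinuousLinearMap.comp_apply,
    smul_apply, smul_eq_mul, hterm]
  rw [← Finset.sum_subset (Finset.subset_univ (Finset.univ \ T))]
  · refine Finset.sum_congr rfl fun i hi => ?_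
    simp [(Finset.mem_sdiff.mp hi).2]
  · intro i _ hi
    simp_all

/-- for the smooth branch `λ(k)` of the dispersion relation with `λ(0) = 0`,
if `∇λ(0) = 0` then `∂²λ/∂k_j∂k_ℓ(0) = −(1/I₁(B)) ∑_{h ≠ m} (v^h)_j (v^m)_ℓ det B(h,m)`. -/
theorem dispersion_branch_second_order (n d : ℕ) (B : Matrix (Fin n) (Fin n) ℝ)
    (hsing : B.det = 0) (hI1 : I1 B ≠ 0) (v : Fin n → Fin d → ℝ)
    (U : Set (Fin d → ℝ)) (hU : U ∈ nhds (0 : Fin d → ℝ))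
    (lam : (Fin d → ℝ) → ℝ)
    (hsmooth : ContDiffOn ℝ (⊤ : ℕ∞) lam U) (hlam0 : lam 0 = 0)
    (hroot : ∀ k ∈ U, dispersion B v (lam k) k = 0)
    (hgrad : fderiv ℝ lam 0 = 0) :
    ∀ j l : Fin d,
      fderiv ℝ (fun k => fderiv ℝ lam k (Pi.single l 1)) 0 (Pi.single j 1)
        = -(1 / I1 B) * ∑ h : Fin n, ∑ m ∈ Finset.univ.erase h,
            v h j * v m l * pminor B {h, m} := by
  intro j l
  -- `a i` is the linear form `k ↦ v^i·k`.
  let a : Fin n → (Fin d → ℝ) →L[ℝ] ℝ := fun i =>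
    ∑ l : Fin d, v i l • ContinuousLinearMap.proj (R := ℝ) (φ := fun _ : Fin d => ℝ) l
  have ha : ∀ i k, a i k = ∑ l, v i l * k l := fun i k => by simp [a]
  have ha1 : ∀ i s, a i (Pi.single s 1) = v i s := fun i s => by simp [ha, Pi.single_apply]
  let x : (Fin d → ℝ) → Fin n → ℝ := fun k i => lam k + a i k
  have hx0 : x 0 = 0 := by funext i; simp [x, hlam0]
  have hsm : ContDiffAt ℝ (⊤ : ℕ∞) lam 0 := hsmooth.contDiffAt hU
  have hxd : ∀ k, DifferentiableAt ℝ lam k →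
      ∀ i, HasFDerivAt (fun k => x k i) (fderiv ℝ lam k + a i) k :=
    fun k hk i => hk.hasFDerivAt.add (a i).hasFDerivAt
  have hdiff : ∀ᶠ k in nhds (0 : Fin d → ℝ), DifferentiableAt ℝ lam k := by
    filter_upwards [eventually_mem_nhds_iff.mpr hU] with k hk
    exact (hsmooth.contDiffAt hk).differentiableAt (by simp)
  have hfirst : ∀ᶠ k in nhds (0 : Fin d → ℝ),
      ∑ i, (frozenRows B {i} (x k)).det * (fderiv ℝ lam k (Pi.single l 1) + v i l) = 0 := by
    filter_upwards [hdiff, eventually_mem_nhds_iff.mpr hU] with k hk hkU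
    have h := hasFDerivAt_det_frozenRows B ∅ (hxd k hk)
    have hz : (fun k => (frozenRows B ∅ (x k)).det) =ᶠ[nhds k] fun _ => (0 : ℝ) := by
      filter_upwards [hkU] with y hy
      rw [← hroot y hy, dispersion_eq_det_frozenRows]
      simp only [x, ha]
    have h0 := h.unique ((hasFDerivAt_const (0 : ℝ) k).congr_of_eventuallyEq hz)
    have h1 := congrArg (fun L : (Fin d → ℝ) →L[ℝ] ℝ => L (Pi.single l 1)) h0
    simpa [sum_apply, ha1, mul_add] using h1
  have hd0 : DifferentiableAt ℝ (fun k => fderiv ℝ lam k (Pi.single l 1)) 0 := by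
    have h1 : ContDiffAt ℝ 1 (fderiv ℝ lam) 0 :=
      hsm.fderiv_right (by norm_cast)
    exact (h1.differentiableAt one_ne_zero).clm_apply (differentiableAt_const _)
  have hG := fun i => hasFDerivAt_det_frozenRows B {i} (hxd 0 hdiff.self_of_nhds)
  have hsum := HasFDerivAt.fun_sum (u := Finset.univ) fun i _ =>
    (hG i).mul (hd0.hasFDerivAt.add_const (v i l))
  have hzero := hsum.unique ((hasFDerivAt_const (0 : ℝ) 0).congr_of_eventuallyEq hfirst)
  have key := congrArg (fun L : (Fin d → ℝ) →L[ℝ] ℝ => L (Pi.single j 1)) hzero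
  simp only [hx0, det_frozenRows_zero, hgrad, zero_add, sum_apply,
    add_apply, smul_apply, smul_eq_mul, ha1,
    zero_apply, Finset.sum_add_distrib, ← Finset.sum_mul] at key
  have hswap : ∑ i, v i l * ∑ m ∈ Finset.univ \ {i}, pminor B (insert m {i}) * v m j
      = ∑ h : Fin n, ∑ m ∈ Finset.univ.erase h, v h j * v m l * pminor B {h, m} := by
    simp only [Finset.mul_sum]
    rw [Finset.sum_comm' (t' := Finset.univ) (s' := fun m => Finset.univ.erase m)]
    · exact Finset.sum_congr rfl fun h _ => Finset.sum_congr rfl fun m _ => by ring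
    · intro i m
      simp [eq_comm]
  rw [hswap] at key
  change I1 B * _ + _ = 0 at key
  field_simp
  linarith
end

section
/- Let B be a symmetric transition matrix with transition graph Γ on vertices {1,…,n} and edge weights μ_{ij}, and let I = {i₁ < … < i_k} ⊆ {1,…,n}. Then det B(i₁,…,i_k) = ∑_F ∏_{{a,b} ∈ F} μ_{ab}, where the sum runs over all edge subsets F of Γ such that the graph ({1,…,n}, F) is a forest (acyclic) with exactly k connected components, each connected component containing exactly one vertex belonging to I; a component consisting of a single vertex contributes the empty product 1. -/
/-- The graph on `{1,…,n}` whose edges are the pairs `{p.1, p.2}` for `p` in a finite set of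
(ordered representatives of) edges. -/
def forestGraph {n : ℕ} (F : Finset (Fin n × Fin n)) : SimpleGraph (Fin n) :=
  SimpleGraph.fromEdgeSet {e : Sym2 (Fin n) | ∃ p ∈ F, e = s(p.1, p.2)}

/-- A choice of a parent `f i` for each `i ∉ I` is *ranked* when some height function strictly
decreases along it; on a finite vertex set this says that following parents always ends in `I`,
i.e. that `f` is a forest oriented towards its root set `I`. -/
def Ranked {n : ℕ} {I : Finset (Fin n)} (f : {i : Fin n // i ∉ I} → Fin n) : Prop :=
  ∃ h : Fin n → ℕ, ∀ i, h (f i) < h i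

/-- The self-map of the vertex set which moves every `v ∉ I` to its parent and fixes `I`. -/
def parentMap {n : ℕ} {I : Finset (Fin n)} (f : {i : Fin n // i ∉ I} → Fin n) (v : Fin n) :
    Fin n :=
  if hv : v ∉ I then f ⟨v, hv⟩ else v

/-- The edges `{i, f i}`, each encoded as an increasing pair. -/
def edgesOf {n : ℕ} {I : Finset (Fin n)} (f : {i : Fin n // i ∉ I} → Fin n) :
    Finset (Fin n × Fin n) :=
  Finset.univ.image fun i : {i : Fin n // i ∉ I} => (min (i : Fin n) (f i), max (i : Fin n) (f i))

/-- `F` is a set of increasing pairs forming a forest on `{1,…,n}` each of whose components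
contains exactly one vertex of `I` (so that there are `I.card` components). -/
def IsRootedForest {n : ℕ} (I : Finset (Fin n)) (F : Finset (Fin n × Fin n)) : Prop :=
  (∀ p ∈ F, p.1 < p.2) ∧ (forestGraph F).IsAcyclic ∧
    Nat.card (forestGraph F).ConnectedComponent = I.card ∧
    ∀ c : (forestGraph F).ConnectedComponent,
      ∃! i : Fin n, i ∈ I ∧ (forestGraph F).connectedComponentMk i = c

/-! ### Parent functions and their roots -/

section ParentMap

variable {n : ℕ} {I : Finset (Fin n)} {f g : {i : Fin n // i ∉ I} → Fin n}

lemma parentMap_of_mem {v : Fin n} (hv : v ∈ I) : parentMap f v = v := by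
  simp [parentMap, hv]

lemma parentMap_coe (i : {i : Fin n // i ∉ I}) : parentMap f i = f i := by
  simp [parentMap, i.2]

/-- If following parents from every vertex reaches `I`, then `f` is ranked, by the number of
steps needed. -/
lemma ranked_of_forall_exists (H : ∀ v, ∃ m, (parentMap f)^[m] v ∈ I) : Ranked f := by
  classical
  refine ⟨fun v => Nat.find (H v), fun i => ?_⟩
  have hpos : Nat.find (H i) ≠ 0 := by
    intro h0
    have := Nat.find_spec (H i)
    rw [h0] at this
    exact i.2 this
  obtain ⟨k, hk⟩ := Nat.exists_eq_succ_of_ne_zero hpos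
  have hs := Nat.find_spec (H i)
  rw [hk, Function.iterate_succ_apply, parentMap_coe] at hs
  have := Nat.find_min' (H (f i)) hs
  change Nat.find (H (f i)) < Nat.find (H i)
  omega

/-- The root of the tree of a ranked `f` containing a given vertex, as a function. -/
lemma Ranked.exists_root (hf : Ranked f) :
    ∃ r : Fin n → Fin n, (∀ v, r v ∈ I) ∧ (∀ v ∈ I, r v = v) ∧ (∀ i, r (f i) = r i) := by
  obtain ⟨h, hh⟩ := hf
  have key : ∀ m v, h v ≤ m → ∃ k, (parentMap f)^[k] v ∈ I := by
    intro m
    induction m with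
    | zero =>
      intro v hv
      refine ⟨0, ?_⟩
      by_contra hvI
      have : h _ < h v := hh ⟨v, hvI⟩
      omega
    | succ m ih =>
      intro v hv
      by_cases hvI : v ∈ I
      · exact ⟨0, hvI⟩
      · have : h _ < h v := hh ⟨v, hvI⟩
        obtain ⟨k, hk⟩ := ih (f ⟨v, hvI⟩) (by omega)
        refine ⟨k + 1, ?_⟩
        rw [Function.iterate_succ_apply,
          show parentMap f v = f ⟨v, hvI⟩ from parentMap_coe ⟨v, hvI⟩]
        exact hk
  choose k hk using fun v => key (h v) v le_rfl
  have hfix : ∀ v ∈ I, ∀ m, (parentMap f)^[m] v = v := fun v hv m =>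
    Function.iterate_fixed (parentMap_of_mem hv) m
  -- A number of steps that works for all vertices at once.
  set N := Finset.univ.sup k with hN
  have hNv : ∀ v, (parentMap f)^[N] v ∈ I := by
    intro v
    have hkv : k v ≤ N := Finset.le_sup (Finset.mem_univ v)
    obtain ⟨d, hd⟩ := Nat.exists_eq_add_of_le' hkv
    rw [hd, Function.iterate_add_apply, hfix _ (hk v)]
    exact hk v
  refine ⟨(parentMap f)^[N], hNv, fun v hv => hfix v hv N, fun i => ?_⟩
  rw [← parentMap_coe (f := f) i, ← Function.iterate_succ_apply, Function.iterate_succ_apply',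
    parentMap_of_mem (hNv i)]

lemma Ranked.apply_ne (hf : Ranked f) (i : {i : Fin n // i ∉ I}) : f i ≠ i := by
  obtain ⟨h, hh⟩ := hf
  intro e
  have := hh i
  rw [e] at this
  omega

lemma Ranked.no_two_cycle (hf : Ranked f) {i j : {i : Fin n // i ∉ I}} (hij : f i = j)
    (hji : f j = i) : False := by
  obtain ⟨h, hh⟩ := hf
  have h1 := hh i
  have h2 := hh j
  rw [hij] at h1
  rw [hji] at h2
  omega

end ParentMap

/-! ### Parent functions and rooted forests -/

section Graph

variable {n : ℕ} {I : Finset (Fin n)} {f g : {i : Fin n // i ∉ I} → Fin n}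

lemma apply_eq_of_reachable {V α : Type*} {G : SimpleGraph V} {r : V → α}
    (hr : ∀ a b, G.Adj a b → r a = r b) {a b : V} (hab : G.Reachable a b) : r a = r b := by
  obtain ⟨w⟩ := hab
  induction w with
  | nil => rfl
  | cons h _ ih => exact (hr _ _ h).trans ih

lemma mk_min_max (a b : Fin n) : s(min a b, max a b) = s(a, b) := by
  rcases le_total a b with h | h <;> simp [h, Sym2.eq_swap]

lemma forestGraph_edgesOf_adj {a b : Fin n} :
    (forestGraph (edgesOf f)).Adj a b ↔ (∃ i : {i : Fin n // i ∉ I}, s(a, b) = s((i : Fin n), f i)) ∧ a ≠ b := by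
  simp [forestGraph, edgesOf, mk_min_max]

lemma mem_of_forestGraph_adj {F : Finset (Fin n × Fin n)} (hF : ∀ p ∈ F, p.1 < p.2)
    {p : Fin n × Fin n} : p ∈ F ↔ p.1 < p.2 ∧ (forestGraph F).Adj p.1 p.2 := by
  obtain ⟨a, b⟩ := p
  simp only [forestGraph, SimpleGraph.fromEdgeSet_adj, Set.mem_ofPred_eq]
  constructor
  · intro h
    exact ⟨hF _ h, ⟨_, h, rfl⟩, (hF _ h).ne⟩
  · rintro ⟨hab, ⟨⟨c, d⟩, hq, e⟩, -⟩
    have hcd := hF _ hq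
    simp only [Sym2.eq_iff] at e hcd hab
    rcases e with ⟨rfl, rfl⟩ | ⟨rfl, rfl⟩
    · exact hq
    · exact absurd hab hcd.asymm

lemma Ranked.lt_of_mem_edgesOf (hf : Ranked f) {p : Fin n × Fin n} (hp : p ∈ edgesOf f) :
    p.1 < p.2 := by
  simp only [edgesOf, Finset.mem_image, Finset.mem_univ, true_and] at hp
  obtain ⟨i, rfl⟩ := hp
  exact min_lt_max.2 (hf.apply_ne i).symm

lemma Ranked.adj (hf : Ranked f) (i : {i : Fin n // i ∉ I}) :
    (forestGraph (edgesOf f)).Adj i (f i) :=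
  forestGraph_edgesOf_adj.2 ⟨⟨i, rfl⟩, (hf.apply_ne i).symm⟩

lemma Ranked.mk_injective (hf : Ranked f) :
    Function.Injective fun i : {i : Fin n // i ∉ I} => s((i : Fin n), f i) := by
  intro i j hij
  simp only [Sym2.eq_iff] at hij
  rcases hij with ⟨h, -⟩ | ⟨h1, h2⟩
  · exact Subtype.ext h
  · exact (hf.no_two_cycle h2 h1.symm).elim

/-- The weight of the edge set of `f` is the product of the weights of the steps of `f`, since
distinct vertices have distinct edges to their parents. -/
lemma Ranked.prod_edgesOf (hf : Ranked f) {μ : Fin n → Fin n → ℝ}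
    (hsym : ∀ i j : Fin n, i ≠ j → μ i j = μ j i) :
    ∏ p ∈ edgesOf f, μ p.1 p.2 = ∏ i : {i : Fin n // i ∉ I}, μ i (f i) := by
  rw [edgesOf, Finset.prod_image]
  · refine Finset.prod_congr rfl fun i _ => ?_
    rcases le_total (i : Fin n) (f i) with h | h
    · simp [h]
    · simpa [h] using hsym _ _ (hf.apply_ne i)
  · intro i _ j _ hij
    apply hf.mk_injective
    simp only [Prod.mk.injEq] at hij
    simp only
    rw [← mk_min_max, hij.1, hij.2, mk_min_max]

lemma Ranked.exists_mem_reachable (hf : Ranked f) (v : Fin n) :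
    ∃ i ∈ I, (forestGraph (edgesOf f)).Reachable v i := by
  obtain ⟨h, hh⟩ := id hf
  induction hv : h v using Nat.strong_induction_on generalizing v with
  | _ m ih =>
    by_cases hvI : v ∈ I
    · exact ⟨v, hvI, .refl _⟩
    · obtain ⟨i, hi, hr⟩ := ih _ (hv ▸ hh ⟨v, hvI⟩) (f ⟨v, hvI⟩) rfl
      exact ⟨i, hi, (hf.adj ⟨v, hvI⟩).reachable.trans hr⟩

/-- Removing the edge `{i, f i}` disconnects the descendants of `i` from the other vertices, so
every edge is a bridge. -/
lemma Ranked.isAcyclic (hf : Ranked f) : (forestGraph (edgesOf f)).IsAcyclic := by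
  rw [SimpleGraph.isAcyclic_iff_forall_adj_isBridge]
  have key : ∀ i : {i : Fin n // i ∉ I},
      (forestGraph (edgesOf f)).IsBridge s((i : Fin n), f i) := by
    intro i
    rw [SimpleGraph.isBridge_iff]
    intro hr
    let D : Fin n → Prop := fun v => ∃ m, (parentMap f)^[m] v = i
    have hstep : ∀ j, j ≠ i → (D j ↔ D (f j)) := by
      intro j hj
      constructor
      · rintro ⟨m, hm⟩
        cases m with
        | zero => exact absurd (Subtype.ext hm) hj
        | succ m =>
          rw [Function.iterate_succ_apply, parentMap_coe] at hm
          exact ⟨m, hm⟩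
      · rintro ⟨m, hm⟩
        exact ⟨m + 1, by rw [Function.iterate_succ_apply, parentMap_coe]; exact hm⟩
    have hinv := apply_eq_of_reachable (r := D) (fun a b hab => by
      rw [SimpleGraph.deleteEdges_adj, forestGraph_edgesOf_adj] at hab
      obtain ⟨⟨⟨j, hj⟩, -⟩, hne⟩ := hab
      have hji : j ≠ i := by
        rintro rfl
        exact hne hj
      rcases Sym2.eq_iff.1 hj with ⟨rfl, rfl⟩ | ⟨rfl, rfl⟩
      · exact propext (hstep _ hji)
      · exact propext (hstep _ hji).symm) hr
    obtain ⟨m, hm⟩ : D (f i) := by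
      rw [← hinv]
      exact ⟨0, rfl⟩
    obtain ⟨h, hh⟩ := hf
    have hle : ∀ m v, h ((parentMap f)^[m] v) ≤ h v := by
      intro m
      induction m with
      | zero => intro v; exact le_rfl
      | succ m ih =>
        intro v
        rw [Function.iterate_succ_apply]
        refine (ih _).trans ?_
        by_cases hv : v ∈ I
        · rw [parentMap_of_mem hv]
        · rw [show parentMap f v = f ⟨v, hv⟩ from parentMap_coe ⟨v, hv⟩]
          exact (hh ⟨v, hv⟩).le
    have h1 := hle m (f i)
    rw [hm] at h1
    exact absurd (hh i) h1.not_gt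
  intro a b hab
  obtain ⟨⟨i, hi⟩, -⟩ := forestGraph_edgesOf_adj.1 hab
  rw [hi]
  exact key i

lemma card_component_eq {G : SimpleGraph (Fin n)}
    (h : ∀ c : G.ConnectedComponent, ∃! i : Fin n, i ∈ I ∧ G.connectedComponentMk i = c) :
    Nat.card G.ConnectedComponent = I.card := by
  have hb : Function.Bijective fun i : I => G.connectedComponentMk (i : Fin n) := by
    constructor
    · intro i j hij
      exact Subtype.ext ((h _).unique ⟨i.2, hij⟩ ⟨j.2, rfl⟩)
    · intro c
      obtain ⟨i, ⟨hi, hc⟩, -⟩ := h c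
      exact ⟨⟨i, hi⟩, hc⟩
  rw [← Nat.card_eq_of_bijective _ hb]
  simp

/-- The edge set of a ranked `f` is a rooted forest: every vertex is joined to a vertex of `I`
by following parents, and the root function is constant on components. -/
lemma Ranked.isRootedForest (hf : Ranked f) : IsRootedForest I (edgesOf f) := by
  have huniq : ∀ c : (forestGraph (edgesOf f)).ConnectedComponent,
      ∃! i : Fin n, i ∈ I ∧ (forestGraph (edgesOf f)).connectedComponentMk i = c := by
    intro c
    induction c using SimpleGraph.ConnectedComponent.ind with | _ v
    obtain ⟨r, hrI, hrfix, hrf⟩ := hf.exists_root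
    have hconst : ∀ a b, (forestGraph (edgesOf f)).Reachable a b → r a = r b := by
      intro a b hab
      refine apply_eq_of_reachable (fun x y hxy => ?_) hab
      obtain ⟨⟨i, hi⟩, -⟩ := forestGraph_edgesOf_adj.1 hxy
      rcases Sym2.eq_iff.1 hi with ⟨rfl, rfl⟩ | ⟨rfl, rfl⟩
      · exact (hrf _).symm
      · exact hrf _
    obtain ⟨i, hi, hvi⟩ := hf.exists_mem_reachable v
    refine ⟨i, ⟨hi, SimpleGraph.ConnectedComponent.eq.2 hvi.symm⟩, ?_⟩
    rintro j ⟨hj, hjv⟩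
    have := hconst _ _ ((SimpleGraph.ConnectedComponent.eq.1 hjv).trans hvi)
    rwa [hrfix j hj, hrfix i hi] at this
  exact ⟨fun p hp => hf.lt_of_mem_edgesOf hp, hf.isAcyclic, card_component_eq huniq, huniq⟩

/-- A ranked `f` is determined by its edges. If `f` and `g` differ at `i`, then the edge
`{i, f i}` can only occur in `g` as `{f i, g (f i)}`, and so `f` and `g` also differ at `f i`,
which has smaller height. -/
lemma Ranked.eq_of_edgesOf_eq (hf : Ranked f) (h : edgesOf f = edgesOf g) : f = g := by
  obtain ⟨ht, hh⟩ := id hf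
  have key : ∀ m (i : {i : Fin n // i ∉ I}), ht i = m → f i = g i := by
    intro m
    induction m using Nat.strong_induction_on with
    | _ m ih =>
      intro i him
      have hadj := hf.adj i
      rw [h] at hadj
      obtain ⟨⟨j, hj⟩, -⟩ := forestGraph_edgesOf_adj.1 hadj
      rcases Sym2.eq_iff.1 hj with ⟨h1, h2⟩ | ⟨h1, h2⟩
      · obtain rfl := Subtype.ext h1
        exact h2
      · have hlt := hh i
        rw [h2, him] at hlt
        have := ih _ hlt j rfl
        exact (hf.no_two_cycle h2 (this.trans h1.symm)).elim
  exact funext fun i => key _ i rfl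

lemma exists_adj_dist_lt {V : Type*} {G : SimpleGraph V} {u v : V} (h : G.Reachable u v)
    (hne : u ≠ v) : ∃ w, G.Adj u w ∧ G.dist w v < G.dist u v := by
  obtain ⟨p, hp⟩ := h.exists_walk_length_eq_dist
  cases p with
  | nil => exact absurd rfl hne
  | cons hadj q =>
    refine ⟨_, hadj, ?_⟩
    have := SimpleGraph.dist_le q
    rw [SimpleGraph.Walk.length_cons] at hp
    omega

/-- Every rooted forest comes from a ranked `f`: send each vertex outside `I` to a neighbour
closer to the vertex of `I` in its component. The resulting subforest has the same components,
hence is everything, because edges of a forest are bridges. -/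
lemma IsRootedForest.exists_ranked {F : Finset (Fin n × Fin n)} (hF : IsRootedForest I F) :
    ∃ f : {i : Fin n // i ∉ I} → Fin n, Ranked f ∧ edgesOf f = F := by
  obtain ⟨hlt, hac, -, huniq⟩ := hF
  set G := forestGraph F with hG
  choose ρ hρ hρu using fun v => huniq (G.connectedComponentMk v)
  have hreach : ∀ v, G.Reachable v (ρ v) := fun v =>
    (SimpleGraph.ConnectedComponent.eq.1 (hρ v).2).symm
  have hρadj : ∀ a b, G.Reachable a b → ρ a = ρ b := fun a b hab =>
    hρu b _ ⟨(hρ a).1, (SimpleGraph.ConnectedComponent.eq.2 ((hreach a).symm.trans hab))⟩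
  have hstep : ∀ i : {i : Fin n // i ∉ I}, ∃ j, G.Adj i j ∧ G.dist j (ρ j) < G.dist i (ρ i) := by
    intro i
    have hne : (i : Fin n) ≠ ρ i := fun e => i.2 (e ▸ (hρ i).1)
    obtain ⟨j, hij, hj⟩ := exists_adj_dist_lt (hreach i) hne
    exact ⟨j, hij, by rwa [← hρadj _ _ hij.reachable]⟩
  choose f hfadj hfdist using hstep
  have hf : Ranked f := ⟨fun v => G.dist v (ρ v), hfdist⟩
  have hle : forestGraph (edgesOf f) ≤ G := by
    intro a b hab
    obtain ⟨⟨i, hi⟩, -⟩ := forestGraph_edgesOf_adj.1 hab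
    rcases Sym2.eq_iff.1 hi with ⟨rfl, rfl⟩ | ⟨rfl, rfl⟩
    · exact hfadj _
    · exact (hfadj _).symm
  have hroot : ∀ v, (forestGraph (edgesOf f)).Reachable v (ρ v) := by
    intro v
    obtain ⟨i, hi, hvi⟩ := hf.exists_mem_reachable v
    rwa [← hρu v i ⟨hi, SimpleGraph.ConnectedComponent.eq.2 (hvi.mono hle).symm⟩]
  have heq : forestGraph (edgesOf f) = G := by
    refine le_antisymm hle fun a b hab => ?_
    by_contra hnot
    have hbr := SimpleGraph.isAcyclic_iff_forall_adj_isBridge.1 hac hab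
    rw [SimpleGraph.isBridge_iff] at hbr
    have hab' : (forestGraph (edgesOf f)).Reachable a b := by
      refine (hroot a).trans ?_
      rw [hρadj a b hab.reachable]
      exact (hroot b).symm
    refine hbr (hab'.mono fun x y hxy => ?_)
    rw [SimpleGraph.deleteEdges_adj]
    refine ⟨hle hxy, fun hxy' => hnot ?_⟩
    rcases Sym2.eq_iff.1 (Set.mem_singleton_iff.1 hxy') with ⟨rfl, rfl⟩ | ⟨rfl, rfl⟩
    · exact hxy
    · exact hxy.symm
  refine ⟨f, hf, ?_⟩
  ext p
  rw [mem_of_forestGraph_adj hlt, mem_of_forestGraph_adj fun p hp => hf.lt_of_mem_edgesOf hp, heq]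

end Graph

/-! ### The determinant as a sum over parent functions -/

section Determinant

variable {n : ℕ} {I : Finset (Fin n)} {f : {i : Fin n // i ∉ I} → Fin n}

/-- The matrix whose row `i` is `e_i - e_{f i}`, with the coordinates in `I` deleted. -/
def stepMatrix {n : ℕ} {I : Finset (Fin n)} (f : {i : Fin n // i ∉ I} → Fin n) :
    Matrix {i : Fin n // i ∉ I} {i : Fin n // i ∉ I} ℝ :=
  Matrix.of fun i j => (if i = j then 1 else 0) - (if f i = j then 1 else 0)

/-- Ordering the indices by height makes the matrix block triangular with identity blocks. -/
lemma Ranked.det_stepMatrix (hf : Ranked f) : (stepMatrix f).det = 1 := by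
  obtain ⟨h, hh⟩ := hf
  have hzero : ∀ i j : {i : Fin n // i ∉ I}, i ≠ j → h i ≤ h j → stepMatrix f i j = 0 := by
    intro i j hij hle
    have h2 : f i ≠ j := by
      intro e
      have := hh i
      rw [e] at this
      omega
    simp [stepMatrix, hij, h2]
  have htri : (stepMatrix f).transpose.BlockTriangular fun i => h i := by
    intro i j hji
    exact hzero _ _ (fun e => by simp [e] at hji) hji.le
  rw [← Matrix.det_transpose, htri.det]
  refine Finset.prod_eq_one fun a _ => ?_
  suffices hone : (stepMatrix f).transpose.toSquareBlock (fun i => h i) a = 1 by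
    rw [hone, Matrix.det_one]
  ext i j
  rw [Matrix.toSquareBlock_def, Matrix.of_apply, Matrix.transpose_apply]
  by_cases hij : i = j
  · subst hij
    have h2 : f i ≠ (i : {i : Fin n // i ∉ I}) := by
      intro e
      have := hh i
      rw [e] at this
      omega
    simp [stepMatrix, h2]
  · rw [Matrix.one_apply_ne hij]
    exact hzero _ _ (fun e => hij (Subtype.ext e.symm)) (by rw [i.2, j.2])

/-- If `f` is not ranked, the indicator of the nonempty set of vertices from which following
parents never reaches `I` lies in the kernel. -/
lemma det_stepMatrix_of_not_ranked (hf : ¬ Ranked f) : (stepMatrix f).det = 0 := by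
  classical
  have hex : ∃ v, ∀ m, (parentMap f)^[m] v ∉ I := by
    by_contra! hcon
    exact hf (ranked_of_forall_exists hcon)
  obtain ⟨v, hv⟩ := hex
  let S : Fin n → Prop := fun v => ∀ m, (parentMap f)^[m] v ∉ I
  have hS : ∀ i : {i : Fin n // i ∉ I}, S i ↔ S (f i) := by
    intro i
    constructor
    · intro hi m
      have := hi (m + 1)
      rwa [Function.iterate_succ_apply, parentMap_coe] at this
    · intro hi m
      cases m with
      | zero => exact i.2
      | succ m =>
        rw [Function.iterate_succ_apply, parentMap_coe]
        exact hi m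
  refine Matrix.exists_mulVec_eq_zero_iff.1
    ⟨fun i => if S i then 1 else 0, fun h0 => ?_, ?_⟩
  · have := congrFun h0 ⟨v, hv 0⟩
    simp only [Pi.zero_apply] at this
    rw [if_pos hv] at this
    exact one_ne_zero this
  · ext i
    simp only [Matrix.mulVec, dotProduct, stepMatrix, Matrix.of_apply, sub_mul,
      Finset.sum_sub_distrib, ite_mul, one_mul, zero_mul, Pi.zero_apply]
    rw [Finset.sum_ite_eq, if_pos (Finset.mem_univ _), sub_eq_zero]
    by_cases hfi : f i ∈ I
    · have h1 : ¬ S i := fun h => (hS i).1 h 0 hfi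
      rw [if_neg h1, Finset.sum_eq_zero]
      intro j _
      rw [if_neg]
      intro e
      exact j.2 (e ▸ hfi)
    · rw [Finset.sum_eq_single ⟨f i, hfi⟩]
      · simp [hS i]
      · intro j _ hj
        rw [if_neg]
        intro e
        exact hj (Subtype.ext e.symm)
      · simp

/-- Row `i` of the minor is `∑ k, μ i k • (e_i - e_k)`; multilinearity of the determinant in the
rows turns this into a sum over all choices of a parent `k = f i` in each row. -/
lemma pminor_transMatrix {μ : Fin n → Fin n → ℝ}
    (hsym : ∀ i j : Fin n, i ≠ j → μ i j = μ j i) :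
    pminor (transMatrix μ) I
      = ∑ f : {i : Fin n // i ∉ I} → Fin n, (∏ i : {i : Fin n // i ∉ I}, μ i (f i)) * (stepMatrix f).det := by
  have hrow : (transMatrix μ).submatrix (fun i : {i : Fin n // i ∉ I} => (i : Fin n))
      (fun j : {j : Fin n // j ∉ I} => (j : Fin n))
      = fun i : {i : Fin n // i ∉ I} => ∑ k : Fin n, μ i k • fun j : {j : Fin n // j ∉ I} =>
          ((if i = j then 1 else 0) - (if k = j then 1 else 0) : ℝ) := by
    ext i j
    simp only [Matrix.submatrix_apply, transMatrix, Matrix.of_apply, Finset.sum_apply,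
      Pi.smul_apply, smul_eq_mul, mul_sub, Finset.sum_sub_distrib, mul_ite, mul_one, mul_zero,
      Finset.sum_ite_eq', Finset.mem_univ, if_true]
    by_cases hij : i = j
    · subst hij
      -- The diagonal entry `μ i i` cancels.
      rw [if_pos rfl, ← Finset.add_sum_erase _ _ (Finset.mem_univ (i : Fin n))]
      simp only [if_true, add_sub_cancel_left]
      exact Finset.sum_congr rfl fun k hk => hsym _ _ (Finset.ne_of_mem_erase hk)
    · have hij' : (i : Fin n) ≠ j := fun e => hij (Subtype.ext e)
      simp [hij, hij']
  rw [pminor, hrow]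
  change Matrix.detRowAlternating.toMultilinearMap _ = _
  rw [MultilinearMap.map_sum]
  refine Finset.sum_congr rfl fun f _ => ?_
  rw [MultilinearMap.map_smul_univ]
  rfl

end Determinant

/-- all-minors matrix tree theorem, principal case: for a symmetric transition
matrix `B` with transition graph `Γ` (edge `{a,b}` weighted by `μ_{ab}` when `μ_{ab} > 0`) and a
set of indices `I`, `det B(I)` equals the sum, over all edge subsets `F` of `Γ` (encoded as sets
of pairs `(a,b)` with `a < b`) forming a forest with exactly `I.card` connected components, each
component containing exactly one vertex of `I`, of the products `∏_{{a,b} ∈ F} μ_{ab}`. -/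
theorem matrix_tree_all_minors (n : ℕ) (hn : 2 ≤ n) (μ : Fin n → Fin n → ℝ)
    (hnonneg : ∀ i j : Fin n, i ≠ j → 0 ≤ μ i j)
    (hsym : ∀ i j : Fin n, i ≠ j → μ i j = μ j i)
    (I : Finset (Fin n)) :
    pminor (transMatrix μ) I
      = ∑ᶠ F ∈ {F : Finset (Fin n × Fin n) |
            (∀ p ∈ F, p.1 < p.2 ∧ 0 < μ p.1 p.2) ∧
            (forestGraph F).IsAcyclic ∧
            Nat.card (forestGraph F).ConnectedComponent = I.card ∧
            (∀ c : (forestGraph F).ConnectedComponent,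
              ∃! i : Fin n, i ∈ I ∧ (forestGraph F).connectedComponentMk i = c)},
          ∏ p ∈ F, μ p.1 p.2 := by
  classical
  set P : Finset (Fin n × Fin n) → Prop := fun F =>
    (∀ p ∈ F, p.1 < p.2 ∧ 0 < μ p.1 p.2) ∧
      (forestGraph F).IsAcyclic ∧
      Nat.card (forestGraph F).ConnectedComponent = I.card ∧
      (∀ c : (forestGraph F).ConnectedComponent,
        ∃! i : Fin n, i ∈ I ∧ (forestGraph F).connectedComponentMk i = c) with hP
  have hset : {F | P F} = ((Finset.univ.filter P : Finset _) : Set (Finset (Fin n × Fin n))) := by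
    simp
  change _ = ∑ᶠ F ∈ {F | P F}, _
  rw [hset, finsum_mem_coe_finset, pminor_transMatrix hsym]
  have hranked : ∀ f : {i : Fin n // i ∉ I} → Fin n,
      (∏ i : {i : Fin n // i ∉ I}, μ i (f i)) * (stepMatrix f).det ≠ 0 → Ranked f := by
    intro f hf
    by_contra hnr
    exact hf (by rw [det_stepMatrix_of_not_ranked hnr, mul_zero])
  -- Discarding zero terms removes the unranked `f` and those using a pair of weight zero, which
  -- is not an edge of the transition graph.
  refine Finset.sum_bij_ne_zero (fun f _ _ => edgesOf f) ?_ ?_ ?_ ?_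
  · intro f _ hne
    have hf := hranked f hne
    rw [hf.det_stepMatrix, mul_one, ← hf.prod_edgesOf hsym, Finset.prod_ne_zero_iff] at hne
    refine Finset.mem_filter.2 ⟨Finset.mem_univ _, fun p hp => ?_, hf.isRootedForest.2⟩
    have hlt := hf.lt_of_mem_edgesOf hp
    exact ⟨hlt, (hnonneg _ _ hlt.ne).lt_of_ne (hne p hp).symm⟩
  · intro f _ hf g _ _ h
    exact (hranked f hf).eq_of_edgesOf_eq h
  · intro F hF hne
    obtain ⟨-, hpos, hrest⟩ := Finset.mem_filter.1 hF
    obtain ⟨f, hf, rfl⟩ :=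
      IsRootedForest.exists_ranked (I := I) ⟨fun p hp => (hpos p hp).1, hrest⟩
    refine ⟨f, Finset.mem_univ _, ?_, rfl⟩
    rwa [hf.det_stepMatrix, mul_one, ← hf.prod_edgesOf hsym]
  · intro f _ hne
    have hf := hranked f hne
    rw [hf.det_stepMatrix, mul_one, hf.prod_edgesOf hsym]
end

section
/- Let B be a symmetric transition matrix with I₁(B) ≠ 0 and let v¹,…,vⁿ ∈ ℝ^d with ∑_{i=1}^n v^i = 0. Let F₂ be the set of spanning 2-forests of the transition graph, i.e. edge subsets F such that ({1,…,n}, F) is a forest with exactly two connected components T¹ and T², and for a component T let μ_T be the product of the weights μ_{ab} over the edges of T and w(T) := ∑_{i ∈ T} v^i. Then the diffusion matrix satisfies D = (2/I₁(B)) ∑_{F = {T¹,T²} ∈ F₂} μ_{T¹} μ_{T²} (w(T¹) ⊗ w(T¹)). -/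
/-- The tensor product `a ⊗ b`, the `d×d` matrix with entries `a_ℓ b_m`. -/
noncomputable def outer {d : ℕ} (a b : Fin d → ℝ) : Matrix (Fin d) (Fin d) ℝ :=
  Matrix.of fun l m => a l * b m

/-- The symmetric part `M* = (M + Mᵀ)/2` of a square matrix. -/
noncomputable def symPart {d : ℕ} (M : Matrix (Fin d) (Fin d) ℝ) : Matrix (Fin d) (Fin d) ℝ :=
  (1 / 2 : ℝ) • (M + M.transpose)

/-- The diffusion matrix `D := −(2/I₁(B)) ∑_{i<j} det B(i,j) (v^i ⊗ v^j)*`. -/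
noncomputable def diffMatrix {n d : ℕ} (μ : Fin n → Fin n → ℝ) (v : Fin n → Fin d → ℝ) :
    Matrix (Fin d) (Fin d) ℝ :=
  (-(2 / I1 (transMatrix μ))) •
    ∑ i : Fin n, ∑ j ∈ Finset.univ.filter (fun j => i < j),
      pminor (transMatrix μ) {i, j} • symPart (outer (v i) (v j))

/-- The sum `w(T) = ∑_{i ∈ T} v^i` of the velocities over the connected component (tree) `T`
of `forestGraph F` containing the vertex `i₀`. -/
noncomputable def treeSum {n d : ℕ} (F : Finset (Fin n × Fin n)) (v : Fin n → Fin d → ℝ)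
    (i₀ : Fin n) : Fin d → ℝ :=
  ∑ᶠ i ∈ {i : Fin n | (forestGraph F).Reachable i₀ i}, v i

/-! ### A weighted Cauchy–Binet expansion -/

/-- The coefficient of the monomial `∏ p ∈ F, w p` in `det (A * diagonal w * Aᵀ)`. It is defined as
a sum over all maps `g` from rows to columns with image exactly `F`, which avoids choosing an order
on `F`; `cbCoeff_eq_sq` identifies it with a squared minor of `A`. -/
noncomputable def cbCoeff {S E : Type*} [Fintype S] [DecidableEq S] [Fintype E] [DecidableEq E]
    (A : Matrix S E ℝ) (F : Finset E) : ℝ :=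
  ∑ g : S → E with Finset.univ.image g = F,
    (∏ i, A i (g i)) * Matrix.det (Matrix.of fun i j => A j (g i))

theorem cbCoeff_eq_zero {S E : Type*} [Fintype S] [DecidableEq S] [Fintype E] [DecidableEq E]
    (A : Matrix S E ℝ) (F : Finset E) (h : F.card ≠ Fintype.card S) : cbCoeff A F = 0 := by
  unfold cbCoeff
  refine Finset.sum_eq_zero fun g hg => ?_
  rw [Finset.mem_filter] at hg
  have hni : ¬ Function.Injective g := by
    intro hinj
    apply h
    rw [← hg.2, Finset.card_image_of_injective _ hinj, Finset.card_univ]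
  simp only [Function.Injective, not_forall] at hni
  obtain ⟨a, b, hab, hne⟩ := hni
  rw [Matrix.det_zero_of_row_eq hne, mul_zero]
  ext j
  simp [hab]

/-- Expanding `det (A * diagonal w * Aᵀ)` multilinearly in its rows, whose `i`-th one is
`∑ p, (w p * A i p) • (column p of A)`, gives a sum over maps `g : S → E`. Only injective `g`
contribute, and they are grouped by their image. -/
theorem det_weighted {S E : Type*} [Fintype S] [DecidableEq S] [Fintype E] [DecidableEq E]
    (A : Matrix S E ℝ) (w : E → ℝ) :
    (A * Matrix.diagonal w * A.transpose).det
      = ∑ F : Finset E, (∏ p ∈ F, w p) * cbCoeff A F := by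
  have hrow : A * Matrix.diagonal w * A.transpose
      = fun i => ∑ p : E, (w p * A i p) • (fun j => A j p) := by
    ext i j
    rw [Matrix.mul_apply, Finset.sum_apply]
    refine Finset.sum_congr rfl fun p _ => ?_
    simp [Matrix.mul_diagonal, mul_comm]
  have h1 : (A * Matrix.diagonal w * A.transpose).det
      = ∑ g : S → E, (∏ i, w (g i)) * ((∏ i, A i (g i)) *
          Matrix.det (Matrix.of fun i j => A j (g i))) := by
    rw [hrow]
    have := (Matrix.detRowAlternating (n := S) (R := ℝ)).toMultilinearMap.map_sum
      (fun i (p : E) => (w p * A i p) • (fun j => A j p))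
    refine this.trans ?_
    refine Finset.sum_congr rfl fun g _ => ?_
    rw [MultilinearMap.map_smul_univ, Finset.prod_mul_distrib, smul_eq_mul, mul_assoc]
    rfl
  rw [h1, ← Finset.sum_fiberwise (s := Finset.univ) (g := fun g : S → E => Finset.univ.image g)]
  refine Finset.sum_congr rfl fun F _ => ?_
  unfold cbCoeff
  rw [Finset.mul_sum]
  refine Finset.sum_congr rfl fun g hg => ?_
  rw [Finset.mem_filter] at hg
  by_cases hinj : Function.Injective g
  · rw [← hg.2, Finset.prod_image (fun _ _ _ _ h => hinj h)]
  · simp only [Function.Injective, not_forall] at hinj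
    obtain ⟨a, b, hab, hne⟩ := hinj
    rw [Matrix.det_zero_of_row_eq hne, mul_zero, mul_zero, mul_zero]
    ext j
    simp [hab]

/-- For a column set `F` as large as the row set, the coefficient of `F` is the square of the
corresponding minor: with `w` the indicator function of `F`, the monomial of `F` is the only one to
survive in `det_weighted`. -/
theorem cbCoeff_eq_sq {S E : Type*} [Fintype S] [DecidableEq S] [Fintype E] [DecidableEq E]
    (A : Matrix S E ℝ) (F : Finset E) (e : S ≃ F) :
    cbCoeff A F = (A.submatrix id (fun s => (e s : E))).det ^ 2 := by
  have hcard : F.card = Fintype.card S := by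
    rw [Fintype.card_congr e, Fintype.card_coe]
  have h := det_weighted A (fun p => if p ∈ F then 1 else 0)
  rw [Finset.sum_eq_single F] at h
  · rw [Finset.prod_congr rfl (fun p hp => if_pos hp), Finset.prod_const_one, one_mul] at h
    have hsq : ∀ M : Matrix S S ℝ, M.det ^ 2 = (M * M.transpose).det := fun M => by
      rw [Matrix.det_mul, Matrix.det_transpose, sq]
    rw [← h, hsq]
    congr 1
    ext i j
    rw [Matrix.mul_apply, Matrix.mul_apply]
    simp only [Matrix.mul_diagonal, Matrix.transpose_apply, Matrix.submatrix_apply, id]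
    rw [e.sum_comp (fun p : F => A i p * A j p), Finset.sum_coe_sort F (fun p => A i p * A j p)]
    simp [mul_ite, ite_mul, Finset.sum_ite_mem]
  · intro F' _ hne
    by_cases hc : F'.card = Fintype.card S
    · have : ∃ p ∈ F', p ∉ F := by
        by_contra! hsub
        exact hne (Finset.eq_of_subset_of_card_le hsub (by omega))
      obtain ⟨p, hp, hpF⟩ := this
      rw [Finset.prod_eq_zero hp (if_neg hpF), zero_mul]
    · rw [cbCoeff_eq_zero A F' hc, mul_zero]
  · simp

/-! ### The transition matrix as a weighted Laplacian -/

/-- The oriented vertex–edge incidence matrix of the complete directed graph on `Fin n`: the column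
of the pair `p` is `e_{p.1} - e_{p.2}` (zero for `p.1 = p.2`). -/
def inc (n : ℕ) (R : Type*) [Ring R] : Matrix (Fin n) (Fin n × Fin n) R :=
  Matrix.of fun k p => (if k = p.1 then 1 else 0) - (if k = p.2 then 1 else 0)

/-- The weight of an ordered pair: `μ` on the increasing representative of an edge, and zero on every
other pair, so that each undirected edge is counted once. -/
noncomputable def ordWeight {n : ℕ} (μ : Fin n → Fin n → ℝ) (p : Fin n × Fin n) : ℝ :=
  if p.1 < p.2 then μ p.1 p.2 else 0

theorem transMatrix_eq {n : ℕ} (μ : Fin n → Fin n → ℝ)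
    (hsym : ∀ i j : Fin n, i ≠ j → μ i j = μ j i) :
    transMatrix μ = inc n ℝ * Matrix.diagonal (ordWeight μ) * (inc n ℝ).transpose := by
  have hself : ∀ i, ordWeight μ (i, i) = 0 := fun i => by simp [ordWeight]
  have hpair : ∀ i k, i ≠ k → ordWeight μ (i, k) + ordWeight μ (k, i) = μ i k := by
    intro i k hik
    rcases hik.lt_or_gt with h | h
    · simp [ordWeight, h, h.not_gt]
    · simp [ordWeight, h, h.not_gt, hsym i k hik]
  ext i j
  rw [Matrix.mul_apply]
  simp only [Matrix.mul_diagonal, Matrix.transpose_apply, Fintype.sum_prod_type]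
  have key : ∀ a b : Fin n, inc n ℝ i (a, b) * ordWeight μ (a, b) * inc n ℝ j (a, b)
      = (if i = a then (if j = a then ordWeight μ (a, b) else 0) else 0)
        + (if i = b then (if j = b then ordWeight μ (a, b) else 0) else 0)
        - (if i = a then (if j = b then ordWeight μ (a, b) else 0) else 0)
        - (if i = b then (if j = a then ordWeight μ (a, b) else 0) else 0) := by
    intro a b
    simp only [inc, Matrix.of_apply]
    split_ifs <;> ring
  have h1 : ∀ f : Fin n → Fin n → ℝ,
      (∑ a, ∑ b, if i = a then (if j = a then f a b else 0) else 0)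
        = if j = i then ∑ b, f i b else 0 := by
    intro f
    rw [Finset.sum_eq_single i]
    · by_cases hji : j = i <;> simp [hji]
    · intro a _ ha
      simp [ha.symm]
    · simp
  have h4 : ∀ f : Fin n → Fin n → ℝ,
      (∑ a, ∑ b, if i = b then (if j = a then f a b else 0) else 0) = f j i := by
    intro f
    simp
  have h3 : ∀ f : Fin n → Fin n → ℝ,
      (∑ a, ∑ b, if i = a then (if j = b then f a b else 0) else 0) = f i j := by
    intro f
    rw [Finset.sum_comm]
    simp
  have h2 : ∀ f : Fin n → Fin n → ℝ,
      (∑ a, ∑ b, if i = b then (if j = b then f a b else 0) else 0)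
        = if j = i then ∑ b, f b i else 0 := by
    intro f
    rw [Finset.sum_comm]
    exact h1 (fun a b => f b a)
  simp only [key, Finset.sum_sub_distrib, Finset.sum_add_distrib]
  rw [h1 (fun a b => ordWeight μ (a, b)), h2 (fun a b => ordWeight μ (a, b)),
    h3 (fun a b => ordWeight μ (a, b)), h4 (fun a b => ordWeight μ (a, b)),
    transMatrix, Matrix.of_apply]
  by_cases hij : i = j
  · subst hij
    rw [if_pos rfl, if_pos rfl, if_pos rfl, ← Finset.sum_add_distrib, hself, sub_zero, sub_zero,
      ← Finset.add_sum_erase _ _ (Finset.mem_univ i), hself, add_zero, zero_add]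
    refine Finset.sum_congr rfl fun k hk => ?_
    rw [hpair i k (Finset.ne_of_mem_erase hk).symm, hsym k i (Finset.ne_of_mem_erase hk)]
  · rw [if_neg hij, if_neg (Ne.symm hij), if_neg (Ne.symm hij), ← hpair i j hij]
    ring

/-! ### Spanning 2-forests -/

theorem forestGraph_adj {n : ℕ} {F : Finset (Fin n × Fin n)} (hF : ∀ p ∈ F, p.1 < p.2)
    {a b : Fin n} : (forestGraph F).Adj a b ↔ (a, b) ∈ F ∨ (b, a) ∈ F := by
  simp only [forestGraph, SimpleGraph.fromEdgeSet_adj, Set.mem_ofPred_eq]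
  constructor
  · rintro ⟨⟨⟨x, y⟩, hp, h⟩, -⟩
    rcases Sym2.eq_iff.1 h with ⟨h1, h2⟩ | ⟨h1, h2⟩
    · left; simpa [h1, h2] using hp
    · right; simpa [h1, h2] using hp
  · rintro (h | h)
    · exact ⟨⟨_, h, rfl⟩, (hF _ h).ne⟩
    · exact ⟨⟨_, h, Sym2.eq_swap⟩, (hF _ h).ne'⟩

theorem forestGraph_card_edges {n : ℕ} {F : Finset (Fin n × Fin n)} (hF : ∀ p ∈ F, p.1 < p.2) :
    (forestGraph F).edgeSet.ncard = F.card := by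
  have h : (forestGraph F).edgeSet = (fun p : Fin n × Fin n => s(p.1, p.2)) '' (F : Set _) := by
    ext e
    induction e using Sym2.ind with
    | _ a b =>
      rw [SimpleGraph.mem_edgeSet, forestGraph_adj hF]
      simp only [Set.mem_image, Finset.mem_coe, Prod.exists, Sym2.eq_iff]
      constructor
      · rintro (h | h)
        · exact ⟨a, b, h, Or.inl ⟨rfl, rfl⟩⟩
        · exact ⟨b, a, h, Or.inr ⟨rfl, rfl⟩⟩
      · rintro ⟨x, y, h, ⟨rfl, rfl⟩ | ⟨rfl, rfl⟩⟩
        · exact Or.inl h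
        · exact Or.inr h
  rw [h, Set.InjOn.ncard_image, Set.ncard_coe_finset]
  rintro ⟨a, b⟩ hp ⟨c, d⟩ hq h
  rcases Sym2.eq_iff.1 h with ⟨h1, h2⟩ | ⟨h1, h2⟩
  · simp_all
  · have := hF _ hp
    have := hF _ hq
    simp only at *
    subst h1 h2
    exact absurd ‹_› (lt_asymm ‹_›)

theorem reachable_or_of_card_two {V : Type*} [Finite V] {G : SimpleGraph V}
    (h2 : Nat.card G.ConnectedComponent = 2) {i j : V} (hij : ¬ G.Reachable i j) (k : V) :
    G.Reachable i k ∨ G.Reachable j k := by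
  by_contra! hk
  have := Fintype.ofFinite G.ConnectedComponent
  rw [Nat.card_eq_fintype_card] at h2
  have h3 : 2 < Fintype.card G.ConnectedComponent := by
    rw [Fintype.two_lt_card_iff]
    refine ⟨G.connectedComponentMk i, G.connectedComponentMk j, G.connectedComponentMk k,
      ?_, ?_, ?_⟩ <;> simp only [ne_eq, SimpleGraph.ConnectedComponent.eq]
    exacts [hij, hk.1, hk.2]
  omega

theorem card_two_of_reachable_or {V : Type*} [Finite V] {G : SimpleGraph V}
    {i j : V} (hij : ¬ G.Reachable i j) (hP : ∀ k, G.Reachable i k ∨ G.Reachable j k) :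
    Nat.card G.ConnectedComponent = 2 := by
  rw [Nat.card_eq_two_iff]
  refine ⟨G.connectedComponentMk i, G.connectedComponentMk j, ?_, ?_⟩
  · simpa only [ne_eq, SimpleGraph.ConnectedComponent.eq] using hij
  · ext c
    induction c using SimpleGraph.ConnectedComponent.ind with
    | _ k =>
      simp only [Set.mem_insert_iff, Set.mem_singleton_iff, Set.mem_univ, iff_true,
        SimpleGraph.ConnectedComponent.eq]
      exact (hP k).imp SimpleGraph.Reachable.symm SimpleGraph.Reachable.symm

theorem connected_sup_edge {V : Type*} {G : SimpleGraph V} {i j : V} (hij : i ≠ j)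
    (hP : ∀ k, G.Reachable i k ∨ G.Reachable j k) : (G ⊔ SimpleGraph.edge i j).Connected := by
  have hadj : (G ⊔ SimpleGraph.edge i j).Adj i j := by
    simp [SimpleGraph.edge_adj, hij]
  have h : ∀ k, (G ⊔ SimpleGraph.edge i j).Reachable i k := by
    intro k
    rcases hP k with h | h
    · exact h.mono le_sup_left
    · exact hadj.reachable.trans (h.mono le_sup_left)
  have : Nonempty V := ⟨i⟩
  exact ⟨fun a b => (h a).symm.trans (h b)⟩

theorem edgeSet_sup_edge {V : Type*} {G : SimpleGraph V} {i j : V} (hij : i ≠ j) :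
    (G ⊔ SimpleGraph.edge i j).edgeSet = insert s(i, j) G.edgeSet := by
  rw [SimpleGraph.edgeSet_sup, SimpleGraph.edgeSet_edge_of_ne hij, Set.union_comm,
    Set.singleton_union]

/-- `F` is a spanning 2-forest separating `i` from `j` exactly when it has `n - 2` edges and every
vertex is joined to `i` or to `j`. Both conditions say that adding the edge `ij`, absent from `F`,
yields a spanning tree. -/
theorem separating_iff {n : ℕ} {F : Finset (Fin n × Fin n)} (hF : ∀ p ∈ F, p.1 < p.2)
    {i j : Fin n} (hij : i ≠ j) :
    ((forestGraph F).IsAcyclic ∧ Nat.card (forestGraph F).ConnectedComponent = 2 ∧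
      ¬ (forestGraph F).Reachable i j) ↔
    (F.card + 2 = n ∧ ∀ k, (forestGraph F).Reachable i k ∨ (forestGraph F).Reachable j k) := by
  set G := forestGraph F with hG
  have hE : G.edgeSet.ncard = F.card := forestGraph_card_edges hF
  constructor
  · rintro ⟨hac, h2, hr⟩
    have hP := reachable_or_of_card_two h2 hr
    refine ⟨?_, hP⟩
    have htree : (G ⊔ SimpleGraph.edge i j).IsTree :=
      ⟨connected_sup_edge hij hP, hac.sup_edge_of_not_reachable hr⟩
    have := (SimpleGraph.isTree_iff_connected_and_card.1 htree).2
    rw [Nat.card_coe_set_eq, edgeSet_sup_edge hij, Set.ncard_insert_of_notMem, hE,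
      Nat.card_eq_fintype_card, Fintype.card_fin] at this
    · omega
    · exact fun h => hr (SimpleGraph.Adj.reachable h)
  · rintro ⟨hc, hP⟩
    have hconn := connected_sup_edge hij hP
    have hr : ¬ G.Reachable i j := by
      intro hr
      have hne : Nonempty (Fin n) := ⟨i⟩
      have hGc : G.Connected := by
        have h : ∀ k, G.Reachable i k := fun k => (hP k).elim id hr.trans
        exact ⟨fun a b => (h a).symm.trans (h b)⟩
      have := hGc.card_vert_le_card_edgeSet_add_one
      rw [Nat.card_coe_set_eq, hE, Nat.card_eq_fintype_card, Fintype.card_fin] at this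
      omega
    refine ⟨?_, card_two_of_reachable_or hr hP, hr⟩
    have htree : (G ⊔ SimpleGraph.edge i j).IsTree := by
      rw [SimpleGraph.isTree_iff_connected_and_card]
      refine ⟨hconn, ?_⟩
      rw [Nat.card_coe_set_eq, edgeSet_sup_edge hij, Set.ncard_insert_of_notMem, hE,
        Nat.card_eq_fintype_card, Fintype.card_fin]
      · omega
      · exact fun h => hr (SimpleGraph.Adj.reachable h)
    exact htree.isAcyclic.anti le_sup_left

/-! ### The reduced incidence determinants -/

/-- If every vertex is joined to a deleted one, the reduced incidence matrix is invertible over `ℤ`.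
Its columns are differences of the vectors `δ a`, `δ b` for adjacent `a`, `b`, where `δ` vanishes on
deleted vertices; following a path to a deleted vertex puts every basis vector `δ k` in the integer
column span. -/
theorem det_inc_isUnit {n : ℕ} {F : Finset (Fin n × Fin n)} (hF : ∀ p ∈ F, p.1 < p.2)
    (U : Finset (Fin n)) (e : {k : Fin n // k ∉ U} ≃ F)
    (hP : ∀ k, ∃ u ∈ U, (forestGraph F).Reachable u k) :
    IsUnit ((inc n ℤ).submatrix (fun k : {k : Fin n // k ∉ U} => (k : Fin n))
      (fun s => (e s : Fin n × Fin n))).det := by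
  set M := (inc n ℤ).submatrix (fun k : {k : Fin n // k ∉ U} => (k : Fin n))
      (fun s => (e s : Fin n × Fin n)) with hM
  rw [← Matrix.isUnit_iff_isUnit_det, ← Matrix.mulVec_surjective_iff_isUnit]
  let R : Submodule ℤ ({k : Fin n // k ∉ U} → ℤ) := LinearMap.range M.mulVecLin
  let δ : Fin n → {k : Fin n // k ∉ U} → ℤ := fun k s => if (s : Fin n) = k then 1 else 0
  have hedge : ∀ p ∈ F, δ p.1 - δ p.2 ∈ R := by
    intro p hp
    refine ⟨Pi.single (e.symm ⟨p, hp⟩) 1, ?_⟩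
    rw [Matrix.mulVecLin_apply, Matrix.mulVec_single_one]
    ext s
    simp [hM, inc, δ]
  have hreach : ∀ a b, (forestGraph F).Reachable a b → δ a - δ b ∈ R := by
    intro a b hab
    rw [SimpleGraph.reachable_iff_reflTransGen] at hab
    induction hab with
    | refl => rw [sub_self]; exact R.zero_mem
    | @tail b c _ hbc ih =>
      have h : δ b - δ c ∈ R := by
        rcases (forestGraph_adj hF).1 hbc with h | h
        · exact hedge _ h
        · rw [← neg_sub]; exact R.neg_mem (hedge _ h)
      simpa using R.add_mem ih h
  have hδ : ∀ k, δ k ∈ R := by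
    intro k
    obtain ⟨u, hu, huk⟩ := hP k
    have h0 : δ u = 0 := by
      ext s
      have : (s : Fin n) ≠ u := fun h => s.2 (h ▸ hu)
      simp [δ, this]
    have := R.neg_mem (hreach u k huk)
    simpa [h0] using this
  intro y
  have hy : y = ∑ s : {k : Fin n // k ∉ U}, y s • δ s := by
    ext t
    simp [δ, Finset.sum_apply, Subtype.coe_inj]
  have : y ∈ R := by
    rw [hy]
    exact R.sum_mem fun s _ => R.smul_mem _ (hδ s)
  exact this

/-- If some component contains no deleted vertex, its indicator vector is a nonzero left null vector
of the reduced incidence matrix. -/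
theorem det_inc_eq_zero {n : ℕ} {F : Finset (Fin n × Fin n)} (hF : ∀ p ∈ F, p.1 < p.2)
    (U : Finset (Fin n)) (e : {k : Fin n // k ∉ U} ≃ F)
    (hP : ¬ ∀ k, ∃ u ∈ U, (forestGraph F).Reachable u k) :
    ((inc n ℤ).submatrix (fun k : {k : Fin n // k ∉ U} => (k : Fin n))
      (fun s => (e s : Fin n × Fin n))).det = 0 := by
  classical
  push Not at hP
  obtain ⟨k, hk⟩ := hP
  have hkU : ∀ a, (forestGraph F).Reachable k a → a ∉ U := fun a ha haU => hk a haU ha.symm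
  rw [← Matrix.exists_vecMul_eq_zero_iff]
  refine ⟨fun s => if (forestGraph F).Reachable k s then 1 else 0, ?_, ?_⟩
  · intro h
    have := congrFun h ⟨k, hkU k (SimpleGraph.Reachable.refl k)⟩
    simp at this
  · ext t
    have hsum : ∀ a : Fin n, (∑ s : {k : Fin n // k ∉ U},
        (if (forestGraph F).Reachable k s then (1 : ℤ) else 0) * (if (s : Fin n) = a then 1 else 0))
        = if (forestGraph F).Reachable k a then 1 else 0 := by
      intro a
      by_cases ha : (forestGraph F).Reachable k a
      · rw [Finset.sum_eq_single ⟨a, hkU a ha⟩]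
        · simp
        · intro s _ hs
          have : (s : Fin n) ≠ a := fun h => hs (Subtype.ext h)
          simp [this]
        · simp
      · rw [if_neg ha]
        refine Finset.sum_eq_zero fun s _ => ?_
        by_cases hs : (s : Fin n) = a
        · rw [hs, if_neg ha, zero_mul]
        · rw [if_neg hs, mul_zero]
    simp only [Matrix.vecMul, dotProduct, Matrix.submatrix_apply, inc, Matrix.of_apply, mul_sub,
      Finset.sum_sub_distrib, hsum, Pi.zero_apply]
    have hadj : (forestGraph F).Adj (e t : Fin n × Fin n).1 (e t : Fin n × Fin n).2 :=
      (forestGraph_adj hF).2 (Or.inl (e t).2)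
    have : (forestGraph F).Reachable k (e t : Fin n × Fin n).1 ↔
        (forestGraph F).Reachable k (e t : Fin n × Fin n).2 :=
      ⟨fun h => h.trans hadj.reachable, fun h => h.trans hadj.symm.reachable⟩
    simp [this]

open Classical in
/-- The all-minors matrix-tree theorem for the principal minor `det B(i,j)`: it is the weighted sum
over the spanning 2-forests separating `i` from `j`. -/
theorem pminor_pair {n : ℕ} (μ : Fin n → Fin n → ℝ)
    (hsym : ∀ i j : Fin n, i ≠ j → μ i j = μ j i) {i j : Fin n} (hij : i ≠ j) :
    pminor (transMatrix μ) {i, j} = ∑ F : Finset (Fin n × Fin n), (∏ p ∈ F, ordWeight μ p) *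
      (if (forestGraph F).IsAcyclic ∧ Nat.card (forestGraph F).ConnectedComponent = 2 ∧
        ¬ (forestGraph F).Reachable i j then 1 else 0) := by
  set A := (inc n ℝ).submatrix
    (fun k : {k : Fin n // k ∉ ({i, j} : Finset (Fin n))} => (k : Fin n)) id with hA
  have h1 : pminor (transMatrix μ) {i, j}
      = (A * Matrix.diagonal (ordWeight μ) * A.transpose).det := by
    rw [pminor, transMatrix_eq μ hsym]
    rfl
  have hcardS : Fintype.card {k : Fin n // k ∉ ({i, j} : Finset (Fin n))} + 2 = n := by
    have h2 : ({i, j} : Finset (Fin n)).card = 2 := Finset.card_pair hij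
    have h3 := Finset.card_le_univ ({i, j} : Finset (Fin n))
    have h4 := Finset.card_compl ({i, j} : Finset (Fin n))
    rw [Fintype.card_fin, h2] at h3 h4
    rw [Fintype.card_of_subtype ({i, j} : Finset (Fin n))ᶜ (by simp)]
    omega
  rw [h1, det_weighted]
  refine Finset.sum_congr rfl fun F _ => ?_
  by_cases hF : ∀ p ∈ F, p.1 < p.2
  swap
  · push Not at hF
    obtain ⟨p, hp, hlt⟩ := hF
    rw [Finset.prod_eq_zero hp (by rw [ordWeight, if_neg hlt.not_gt]), zero_mul, zero_mul]
  congr 1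
  simp only [separating_iff hF hij]
  by_cases hc : F.card + 2 = n
  swap
  · rw [cbCoeff_eq_zero _ _ (by omega), if_neg (fun h => hc h.1)]
  have e : {k : Fin n // k ∉ ({i, j} : Finset (Fin n))} ≃ F :=
    Fintype.equivOfCardEq (by rw [Fintype.card_coe]; omega)
  have hcast : (A.submatrix id (fun s => (e s : Fin n × Fin n))).det
      = (((inc n ℤ).submatrix
        (fun k : {k : Fin n // k ∉ ({i, j} : Finset (Fin n))} => (k : Fin n))
        (fun s => (e s : Fin n × Fin n))).det : ℝ) := by
    rw [← eq_intCast (Int.castRingHom ℝ), RingHom.map_det]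
    congr 1
    ext s t
    simp [hA, inc]
  rw [cbCoeff_eq_sq A F e, hcast]
  have hiff : (∀ k, ∃ u ∈ ({i, j} : Finset (Fin n)), (forestGraph F).Reachable u k) ↔
      ∀ k, (forestGraph F).Reachable i k ∨ (forestGraph F).Reachable j k := by simp
  by_cases hP : ∀ k, (forestGraph F).Reachable i k ∨ (forestGraph F).Reachable j k
  · rw [if_pos ⟨hc, hP⟩]
    exact_mod_cast Int.isUnit_sq (det_inc_isUnit hF _ e (hiff.2 hP))
  · rw [if_neg (fun h => hP h.2), det_inc_eq_zero hF _ e (fun h => hP (hiff.1 h))]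
    simp

/-! ### The quadratic form of the velocities -/

theorem sum_lt_symm {n : ℕ} (q : Fin n → Fin n → ℝ) (a b : Fin n → ℝ)
    (hq : ∀ i j, q i j = q j i) (hqq : ∀ i, q i i = 0) :
    ∑ i, ∑ j ∈ Finset.univ.filter (fun j => i < j), q i j * (a i * b j + a j * b i)
      = ∑ i, ∑ j, q i j * (a i * b j) := by
  have h1 : ∀ i j, q i j * (a i * b j) = (if i < j then q i j * (a i * b j) else 0)
      + (if j < i then q i j * (a i * b j) else 0) := by
    intro i j
    rcases lt_trichotomy i j with h | h | h
    · simp [h, h.not_gt]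
    · subst h; simp [hqq]
    · simp [h, h.not_gt]
  have h2 : ∑ i, ∑ j, q i j * (a i * b j)
      = (∑ i, ∑ j, if i < j then q i j * (a i * b j) else 0)
      + ∑ i, ∑ j, if i < j then q j i * (a j * b i) else 0 := by
    rw [Finset.sum_comm (f := fun i j => if i < j then q j i * (a j * b i) else 0),
      ← Finset.sum_add_distrib]
    refine Finset.sum_congr rfl fun i _ => ?_
    rw [← Finset.sum_add_distrib]
    exact Finset.sum_congr rfl fun j _ => h1 i j
  rw [h2, ← Finset.sum_add_distrib]
  refine Finset.sum_congr rfl fun i _ => ?_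
  rw [← Finset.sum_add_distrib, Finset.sum_filter]
  refine Finset.sum_congr rfl fun j _ => ?_
  rw [hq j i]
  split_ifs <;> ring

open Classical in
/-- In a graph with two components `T` (containing `o`) and `Tᶜ`, separated ordered pairs lie in
`T × Tᶜ` or `Tᶜ × T`; since the totals of `a` and `b` vanish, each part contributes minus the product
of the sums over `T`. -/
theorem separated_sum {V : Type*} [Fintype V] {G : SimpleGraph V}
    (h2 : Nat.card G.ConnectedComponent = 2) (o : V) (a b : V → ℝ)
    (ha : ∑ k, a k = 0) (hb : ∑ k, b k = 0) :
    ∑ i, ∑ j, (if ¬ G.Reachable i j then 1 else 0) * (a i * b j)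
      = -2 * ((∑ k, if G.Reachable o k then a k else 0) *
          ∑ k, if G.Reachable o k then b k else 0) := by
  set r : V → ℝ := fun k => if G.Reachable o k then 1 else 0 with hr
  have hsep : ∀ i j, (if ¬ G.Reachable i j then (1 : ℝ) else 0)
      = r i * (1 - r j) + (1 - r i) * r j := by
    intro i j
    by_cases hi : G.Reachable o i
    · have : G.Reachable i j ↔ G.Reachable o j := ⟨hi.trans, hi.symm.trans⟩
      by_cases hj : G.Reachable o j <;> simp [hr, hi, hj, this]
    · by_cases hj : G.Reachable o j
      · have : ¬ G.Reachable i j := fun h => hi (hj.trans h.symm)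
        simp [hr, hi, hj, this]
      · have : G.Reachable i j := (reachable_or_of_card_two h2 hi j).resolve_left hj
        simp [hr, hi, hj, this]
  have hA : (∑ k, if G.Reachable o k then a k else 0) = ∑ k, r k * a k := by simp [hr]
  have hB : (∑ k, if G.Reachable o k then b k else 0) = ∑ k, r k * b k := by simp [hr]
  have hA' : ∑ k, (1 - r k) * a k = - ∑ k, r k * a k := by
    simp [sub_mul, ha]
  have hB' : ∑ k, (1 - r k) * b k = - ∑ k, r k * b k := by
    simp [sub_mul, hb]
  calc _ = ∑ i, ∑ j, ((r i * a i) * ((1 - r j) * b j) + ((1 - r i) * a i) * (r j * b j)) := by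
        refine Finset.sum_congr rfl fun i _ => Finset.sum_congr rfl fun j _ => ?_
        rw [hsep]; ring
    _ = (∑ k, r k * a k) * (∑ k, (1 - r k) * b k) + (∑ k, (1 - r k) * a k) * ∑ k, r k * b k := by
        simp only [Finset.sum_add_distrib, Finset.sum_mul_sum]
    _ = _ := by rw [hA, hB, hA', hB']; ring

open Classical in
theorem treeSum_apply {n d : ℕ} (F : Finset (Fin n × Fin n)) (v : Fin n → Fin d → ℝ)
    (o : Fin n) (l : Fin d) :
    treeSum F v o l = ∑ k, if (forestGraph F).Reachable o k then v k l else 0 := by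
  rw [treeSum, finsum_mem_eq_toFinset_sum, Finset.sum_apply, ← Finset.sum_filter]
  refine Finset.sum_congr ?_ fun _ _ => rfl
  ext k
  simp

/-- for a symmetric transition matrix with `I₁(B) ≠ 0` and speeds summing to
zero, the diffusion matrix is
`D = (2/I₁(B)) ∑_{F = {T¹,T²} ∈ F₂} μ_{T¹} μ_{T²} (w(T¹) ⊗ w(T¹))`,
the sum running over all spanning 2-forests of the transition graph, where `T¹` is the tree
containing the smallest vertex. -/
theorem diffMatrix_two_forest_formula (n d : ℕ) (hn : 2 ≤ n) (μ : Fin n → Fin n → ℝ)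
    (hnonneg : ∀ i j : Fin n, i ≠ j → 0 ≤ μ i j)
    (hsym : ∀ i j : Fin n, i ≠ j → μ i j = μ j i)
    (hI1 : I1 (transMatrix μ) ≠ 0)
    (v : Fin n → Fin d → ℝ) (hv : ∑ i : Fin n, v i = 0) :
    diffMatrix μ v
      = (2 / I1 (transMatrix μ)) •
          ∑ᶠ F ∈ {F : Finset (Fin n × Fin n) |
                (∀ p ∈ F, p.1 < p.2 ∧ 0 < μ p.1 p.2) ∧
                (forestGraph F).IsAcyclic ∧
                Nat.card (forestGraph F).ConnectedComponent = 2},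
              (∏ p ∈ F, μ p.1 p.2) •
                outer (treeSum F v (⟨0, by omega⟩ : Fin n))
                  (treeSum F v (⟨0, by omega⟩ : Fin n)) := by
  classical
  ext l m
  set o : Fin n := ⟨0, by omega⟩ with ho
  set c := 2 / I1 (transMatrix μ) with hc
  have hvl : ∀ l, ∑ k, v k l = 0 := fun l => by
    rw [← Finset.sum_apply, hv]; rfl
  let W : Finset (Fin n × Fin n) → ℝ := fun F => ∏ p ∈ F, ordWeight μ p
  let isF : Finset (Fin n × Fin n) → Prop := fun F =>
    (forestGraph F).IsAcyclic ∧ Nat.card (forestGraph F).ConnectedComponent = 2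
  -- The forest expansion of `det B(i,j)`, extended by zero to the diagonal `i = j`.
  let q : Fin n → Fin n → ℝ := fun i j => ∑ F : Finset (Fin n × Fin n),
    if isF F then W F * (if ¬ (forestGraph F).Reachable i j then 1 else 0) else 0
  have hq : ∀ i j, i ≠ j → pminor (transMatrix μ) {i, j} = q i j := by
    intro i j hij
    rw [pminor_pair μ hsym hij]
    refine Finset.sum_congr rfl fun F _ => ?_
    simp only [isF, W, ← and_assoc]
    split_ifs <;> simp_all
  have hL : diffMatrix μ v l m = -c / 2 * ∑ i, ∑ j, q i j * (v i l * v j m) := by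
    rw [← sum_lt_symm q (fun k => v k l) (fun k => v k m)]
    · simp only [diffMatrix, Matrix.smul_apply, Matrix.sum_apply, symPart, outer,
        Matrix.add_apply, Matrix.transpose_apply, Matrix.of_apply, smul_eq_mul]
      rw [← hc, neg_div, neg_mul, neg_mul, div_eq_mul_inv c, mul_assoc c]
      congr 2
      rw [Finset.mul_sum]
      refine Finset.sum_congr rfl fun i _ => ?_
      rw [Finset.mul_sum]
      refine Finset.sum_congr rfl fun j hj => ?_
      rw [hq i j (Finset.mem_filter.1 hj).2.ne]
      ring
    · intro i j
      simp only [q, SimpleGraph.reachable_comm]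
    · intro i
      simp [q]
  have hsum : ∑ i, ∑ j, q i j * (v i l * v j m)
      = ∑ F : Finset (Fin n × Fin n),
        if isF F then -2 * (W F * (treeSum F v o l * treeSum F v o m)) else 0 := by
    have : ∀ F : Finset (Fin n × Fin n),
        (if isF F then -2 * (W F * (treeSum F v o l * treeSum F v o m)) else 0)
        = ∑ i, ∑ j, (if isF F then W F * (if ¬ (forestGraph F).Reachable i j then 1 else 0) else 0)
            * (v i l * v j m) := by
      intro F
      by_cases hF : isF F
      · simp only [if_pos hF, mul_assoc, ← Finset.mul_sum]
        have h : ∑ i, ∑ j, (if ¬ (forestGraph F).Reachable i j then (1 : ℝ) else 0) *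
            (v i l * v j m) = -2 * (treeSum F v o l * treeSum F v o m) := by
          rw [treeSum_apply, treeSum_apply]
          convert separated_sum hF.2 o (fun k => v k l) (fun k => v k m) (hvl l) (hvl m)
        rw [h]
        ring
      · simp [hF]
    simp only [this, q, Finset.sum_mul]
    rw [Finset.sum_comm (s := (Finset.univ : Finset (Finset (Fin n × Fin n))))]
    refine Finset.sum_congr rfl fun i _ => ?_
    rw [Finset.sum_comm]
  rw [hL, hsum, finsum_mem_eq_toFinset_sum, Matrix.smul_apply, Matrix.sum_apply, smul_eq_mul,
    Set.toFinset_ofPred, Finset.sum_filter, Finset.mul_sum, Finset.mul_sum]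
  refine Finset.sum_congr rfl fun F _ => ?_
  simp only [outer, Matrix.smul_apply, Matrix.of_apply, smul_eq_mul]
  by_cases hF : isF F
  · rw [if_pos hF]
    by_cases hpos : ∀ p ∈ F, p.1 < p.2 ∧ 0 < μ p.1 p.2
    · rw [if_pos ⟨hpos, hF⟩]
      have hW : W F = ∏ p ∈ F, μ p.1 p.2 :=
        Finset.prod_congr rfl fun p hp => if_pos (hpos p hp).1
      rw [hW]
      ring
    · rw [if_neg (fun h => hpos h.1)]
      -- Some pair in `F` is not increasing or carries zero weight, so the product vanishes.
      push Not at hpos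
      obtain ⟨p, hp, hle⟩ := hpos
      have hz : ordWeight μ p = 0 := by
        unfold ordWeight
        split_ifs with hlt
        · exact le_antisymm (hle hlt) (hnonneg _ _ hlt.ne)
        · rfl
      have hW : W F = 0 := Finset.prod_eq_zero hp hz
      rw [hW]
      ring
  · rw [if_neg hF, if_neg (fun h => hF h.2)]
    ring
end

section
/- Let n = 2k, let B be a symmetric transition matrix with I₁(B) ≠ 0, and let v¹,…,vⁿ ∈ ℝ^d satisfy v^{2ℓ} = −v^{2ℓ−1} for every ℓ ∈ {1,…,k}. Assume det B(2i−1, j) = det B(2i, j) for every i ∈ {1,…,k} and every j ∈ {1,…,n} with j ∉ {2i−1, 2i}. Then the diffusion matrix satisfies D = (2/I₁(B)) ∑_{i=1}^k det B(2i−1, 2i) (v^{2i} ⊗ v^{2i}). -/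
/-- The index `2i−1` (1-based), i.e. the first member of the `i`-th pair of indices. -/
def pairA {k : ℕ} (i : Fin k) : Fin (2 * k) := ⟨2 * (i : ℕ), by have := i.isLt; omega⟩

/-- The index `2i` (1-based), i.e. the second member of the `i`-th pair of indices. -/
def pairB {k : ℕ} (i : Fin k) : Fin (2 * k) := ⟨2 * (i : ℕ) + 1, by have := i.isLt; omega⟩

/-- Summing over all indices amounts to summing over the pairs. -/
lemma sum_pairs {M : Type*} [AddCommMonoid M] (k : ℕ) (f : Fin (2 * k) → M) :
    ∑ j, f j = ∑ l : Fin k, (f (pairA l) + f (pairB l)) := by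
  induction k with
  | zero => rfl
  | succ k ih =>
    rw [Fin.sum_univ_castSucc (n := k)]
    have h : ∑ j, f j = (∑ j : Fin (2 * k), f j.castSucc.castSucc)
        + f (Fin.last (2 * k)).castSucc + f (Fin.last (2 * k + 1)) := by
      rw [← Fin.sum_univ_castSucc (n := 2 * k) (fun j => f j.castSucc)]
      exact Fin.sum_univ_castSucc (n := 2 * k + 1) f
    rw [h, ih, add_assoc]
    rfl

lemma symPart_outer_neg_right {d : ℕ} (a b : Fin d → ℝ) :
    symPart (outer a (-b)) = -symPart (outer a b) := by
  ext l m
  simp [symPart, outer]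
  ring

lemma symPart_outer_neg_self {d : ℕ} (a : Fin d → ℝ) :
    symPart (outer a (-a)) = -outer (-a) (-a) := by
  ext l m
  simp [symPart, outer]
  ring

/-- A pair `{2m−1, 2m}` not containing `i` contributes nothing to the sum over `j > i`. -/
lemma pair_cancel {k d : ℕ} (μ : Fin (2 * k) → Fin (2 * k) → ℝ) (v : Fin (2 * k) → Fin d → ℝ)
    (hpair : ∀ i : Fin k, v (pairB i) = -v (pairA i))
    (hminor : ∀ i : Fin k, ∀ j : Fin (2 * k), j ≠ pairA i → j ≠ pairB i →
      pminor (transMatrix μ) {pairA i, j} = pminor (transMatrix μ) {pairB i, j})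
    (i : Fin (2 * k)) (m : Fin k) (hA : i ≠ pairA m) (hB : i ≠ pairB m) :
    (if i < pairA m then
        pminor (transMatrix μ) {i, pairA m} • symPart (outer (v i) (v (pairA m))) else 0)
      + (if i < pairB m then
        pminor (transMatrix μ) {i, pairB m} • symPart (outer (v i) (v (pairB m))) else 0) = 0 := by
  have hlt : i < pairB m ↔ i < pairA m := by
    simp only [pairA, pairB, Fin.lt_def, ne_eq, Fin.ext_iff] at *
    omega
  rw [Finset.pair_comm i (pairA m), Finset.pair_comm i (pairB m), hminor m i hA hB, hpair,
    symPart_outer_neg_right]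
  simp only [hlt]
  split_ifs <;> simp


/-- let `n = 2k`, `B` a symmetric transition matrix with `I₁(B) ≠ 0`, and
speeds with `v^{2ℓ} = −v^{2ℓ−1}`. If `det B(2i−1, j) = det B(2i, j)` for all `i` and all
`j ∉ {2i−1, 2i}`, then `D = (2/I₁(B)) ∑_{i=1}^k det B(2i−1, 2i) (v^{2i} ⊗ v^{2i})`. -/
theorem diffMatrix_paired_speeds (k d : ℕ) (hk : 1 ≤ k)
    (μ : Fin (2 * k) → Fin (2 * k) → ℝ)
    (hnonneg : ∀ i j : Fin (2 * k), i ≠ j → 0 ≤ μ i j)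
    (hsym : ∀ i j : Fin (2 * k), i ≠ j → μ i j = μ j i)
    (hI1 : I1 (transMatrix μ) ≠ 0)
    (v : Fin (2 * k) → Fin d → ℝ)
    (hpair : ∀ i : Fin k, v (pairB i) = -v (pairA i))
    (hminor : ∀ i : Fin k, ∀ j : Fin (2 * k), j ≠ pairA i → j ≠ pairB i →
      pminor (transMatrix μ) {pairA i, j} = pminor (transMatrix μ) {pairB i, j}) :
    diffMatrix μ v
      = (2 / I1 (transMatrix μ)) •
          ∑ i : Fin k, pminor (transMatrix μ) {pairA i, pairB i} •
            outer (v (pairB i)) (v (pairB i)) := by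
  have hne : ∀ l m : Fin k, m ≠ l →
      pairA l ≠ pairA m ∧ pairA l ≠ pairB m ∧ pairB l ≠ pairA m ∧ pairB l ≠ pairB m := by
    intro l m h
    simp only [pairA, pairB, ne_eq, Fin.ext_iff] at *
    omega
  have hAB : ∀ l : Fin k, pairA l < pairB l := fun l => by simp [pairA, pairB, Fin.lt_def]
  unfold diffMatrix
  simp only [Finset.sum_filter]
  rw [neg_smul, ← smul_neg, sum_pairs, ← Finset.sum_neg_distrib]
  congr 1
  refine Finset.sum_congr rfl fun l _ => ?_
  rw [sum_pairs, sum_pairs, Finset.sum_eq_single l, Finset.sum_eq_single l]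
  · rw [if_neg (lt_irrefl _), if_pos (hAB l), if_neg (hAB l).not_gt, if_neg (lt_irrefl _), hpair,
      symPart_outer_neg_self]
    simp
  · intro m _ h
    exact pair_cancel μ v hpair hminor _ m (hne l m h).2.2.1 (hne l m h).2.2.2
  · simp
  · intro m _ h
    exact pair_cancel μ v hpair hminor _ m (hne l m h).1 (hne l m h).2.1
  · simp
end

section
/- Let B be a symmetric transition matrix whose transition graph is connected, let v¹,…,vⁿ ∈ ℝ^d, let k ∈ ℝ^d and λ ∈ ℝ, and suppose F ∈ ℂⁿ is nonzero and satisfies (iλ + i v^j·k) F_j + (B F)_j = 0 for every j = 1,…,n. Then F is a scalar multiple of the all-ones vector 𝟙 = (1,…,1), the scalar products v^j·k coincide for all j ∈ {1,…,n}, and λ = −(1/n) ∑_{j=1}^n v^j·k. -/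
/-- The off-diagonal part of the rates: the values `μ i i`, which do not enter the transition
matrix, are replaced by `0`. -/
noncomputable def offDiag {n : ℕ} (μ : Fin n → Fin n → ℝ) (i j : Fin n) : ℝ :=
  if i = j then 0 else μ i j

theorem transMatrix_mulVec {n : ℕ} (μ : Fin n → Fin n → ℝ)
    (hsym : ∀ i j : Fin n, i ≠ j → μ i j = μ j i) (F : Fin n → ℂ) (i : Fin n) :
    ((transMatrix μ).map (fun x : ℝ => (x : ℂ))).mulVec F i
      = ∑ j, (offDiag μ i j : ℂ) * (F i - F j) := by
  have hdiag : ∑ k ∈ Finset.univ.erase i, μ k i = ∑ j, offDiag μ i j := by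
    rw [← Finset.add_sum_erase Finset.univ (offDiag μ i) (Finset.mem_univ i)]
    simp only [offDiag, if_true, zero_add]
    refine Finset.sum_congr rfl fun j hj => ?_
    have hne : j ≠ i := Finset.ne_of_mem_erase hj
    rw [if_neg hne.symm, hsym j i hne]
  have hentry : ∀ j, ((transMatrix μ i j : ℝ) : ℂ) * F j
      = (if i = j then ((∑ l, offDiag μ i l : ℝ) : ℂ) * F j else 0)
        - (offDiag μ i j : ℂ) * F j := by
    intro j
    by_cases h : i = j
    · subst h
      have hii : offDiag μ i i = 0 := by simp [offDiag]
      rw [transMatrix, Matrix.of_apply, if_pos rfl, if_pos rfl, hdiag, hii]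
      simp
    · simp [transMatrix, offDiag, h]
  simp only [Matrix.mulVec, dotProduct, Matrix.map_apply, hentry, mul_sub,
    Finset.sum_sub_distrib, Finset.sum_ite_eq, Finset.mem_univ, if_true]
  push_cast
  rw [Finset.sum_mul]

/-- Summation by parts: the Laplacian with symmetric weights `w` has the Dirichlet energy as its
quadratic form. -/
theorem sum_weight_mul_normSq {n : ℕ} (w : Fin n → Fin n → ℝ) (hw : ∀ i j, w i j = w j i)
    (F : Fin n → ℂ) :
    ∑ i, ∑ j, w i j * Complex.normSq (F i - F j)
      = 2 * ∑ i, (starRingEnd ℂ (F i) * ∑ j, (w i j : ℂ) * (F i - F j)).re := by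
  have h1 : ∀ i, (starRingEnd ℂ (F i) * ∑ j, (w i j : ℂ) * (F i - F j)).re
      = ∑ j, w i j * (starRingEnd ℂ (F i) * (F i - F j)).re := by
    intro i
    rw [Finset.mul_sum, Complex.re_sum]
    refine Finset.sum_congr rfl fun j _ => ?_
    rw [mul_left_comm, Complex.re_ofReal_mul]
  have h2 : ∑ i, ∑ j, w i j * (starRingEnd ℂ (F i) * (F i - F j)).re
      = ∑ i, ∑ j, w i j * (starRingEnd ℂ (F j) * (F j - F i)).re := by
    rw [Finset.sum_comm]
    exact Finset.sum_congr rfl fun i _ => Finset.sum_congr rfl fun j _ => by rw [hw]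
  simp only [h1]
  rw [two_mul]
  nth_rewrite 2 [h2]
  simp only [← Finset.sum_add_distrib]
  refine Finset.sum_congr rfl fun i _ => Finset.sum_congr rfl fun j _ => ?_
  simp only [Complex.normSq_apply, Complex.mul_re, Complex.sub_re, Complex.sub_im,
    Complex.conj_re, Complex.conj_im]
  ring

/-- for a symmetric transition matrix with connected transition graph, if a
nonzero `F ∈ ℂⁿ` satisfies `(iλ + i v^j·k) F_j + (BF)_j = 0` for all `j`, then `F` is a
multiple of `𝟙`, the products `v^j·k` all coincide, and `λ = −(1/n) ∑_j v^j·k`. -/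
theorem no_purely_imaginary_modes (n d : ℕ) (hn : 2 ≤ n) (μ : Fin n → Fin n → ℝ)
    (hnonneg : ∀ i j : Fin n, i ≠ j → 0 ≤ μ i j)
    (hsym : ∀ i j : Fin n, i ≠ j → μ i j = μ j i)
    (hconn : (transGraph μ).Connected)
    (v : Fin n → Fin d → ℝ) (k : Fin d → ℝ) (lam : ℝ)
    (F : Fin n → ℂ) (hF : F ≠ 0)
    (heq : ∀ j : Fin n,
      (Complex.I * (lam : ℂ) + Complex.I * ((∑ l : Fin d, v j l * k l : ℝ) : ℂ)) * F j
        + ((transMatrix μ).map (fun x : ℝ => (x : ℂ))).mulVec F j = 0) :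
    (∃ c : ℂ, F = fun _ => c) ∧
    (∀ j j' : Fin n, ∑ l : Fin d, v j l * k l = ∑ l : Fin d, v j' l * k l) ∧
    lam = -(1 / (n : ℝ)) * ∑ j : Fin n, ∑ l : Fin d, v j l * k l := by
  have hw : ∀ i j, offDiag μ i j = offDiag μ j i := by
    intro i j
    by_cases h : i = j
    · rw [h]
    · simp [offDiag, h, Ne.symm h, hsym i j h]
  have hw0 : ∀ i j, 0 ≤ offDiag μ i j := by
    intro i j
    by_cases h : i = j
    · simp [offDiag, h]
    · simpa [offDiag, h] using hnonneg i j h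
  simp only [transMatrix_mulVec μ hsym] at heq
  -- The transport term is `i` times a real multiple of `|F_j|²` after pairing with `F̄_j`.
  have hre : ∀ i, (starRingEnd ℂ (F i) * ∑ j, (offDiag μ i j : ℂ) * (F i - F j)).re = 0 := by
    intro i
    rw [eq_neg_of_add_eq_zero_right (heq i)]
    simp only [Complex.mul_re, Complex.mul_im, Complex.neg_re, Complex.neg_im, Complex.add_re,
      Complex.add_im, Complex.I_re, Complex.I_im, Complex.ofReal_re, Complex.ofReal_im,
      Complex.conj_re, Complex.conj_im]
    ring
  have henergy : ∑ i, ∑ j, offDiag μ i j * Complex.normSq (F i - F j) = 0 := by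
    rw [sum_weight_mul_normSq _ hw F]
    simp [hre]
  have hterm : ∀ i j, offDiag μ i j * Complex.normSq (F i - F j) = 0 := by
    have hnn : ∀ i j, 0 ≤ offDiag μ i j * Complex.normSq (F i - F j) :=
      fun i j => mul_nonneg (hw0 i j) (Complex.normSq_nonneg _)
    intro i j
    have hi := (Finset.sum_eq_zero_iff_of_nonneg
      (fun i _ => Finset.sum_nonneg fun j _ => hnn i j)).1 henergy i (Finset.mem_univ i)
    exact (Finset.sum_eq_zero_iff_of_nonneg (fun j _ => hnn i j)).1 hi j (Finset.mem_univ j)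
  have hadj : ∀ i j, (transGraph μ).Adj i j → F i = F j := by
    intro i j h
    obtain ⟨hne, h⟩ := (SimpleGraph.fromRel_adj _ _ _).1 h
    have hpos : 0 < offDiag μ i j := by
      rw [offDiag, if_neg hne]
      rcases h with h | h
      · exact h
      · rwa [hsym i j hne]
    rcases mul_eq_zero.1 (hterm i j) with h0 | h0
    · exact absurd h0 hpos.ne'
    · exact sub_eq_zero.1 (Complex.normSq_eq_zero.1 h0)
  have hconst : ∀ i j, F i = F j := by
    intro i j
    obtain ⟨p⟩ := hconn.preconnected i j
    induction p with
    | nil => rfl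
    | cons h _ ih => exact (hadj _ _ h).trans ih
  have hF0 : ∀ i, F i ≠ 0 := fun i hi => hF (funext fun j => (hconst j i).trans hi)
  have hlam : ∀ j, ∑ l : Fin d, v j l * k l = -lam := by
    intro j
    have hsum : ∑ m, (offDiag μ j m : ℂ) * (F j - F m) = 0 :=
      Finset.sum_eq_zero fun m _ => by rw [hconst j m, sub_self, mul_zero]
    have h := heq j
    rw [hsum, add_zero, ← mul_add] at h
    have h' := (mul_eq_zero.1 ((mul_eq_zero.1 h).resolve_right (hF0 j))).resolve_left
      Complex.I_ne_zero
    have h'' : lam + ∑ l : Fin d, v j l * k l = 0 := by exact_mod_cast h'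
    linarith
  refine ⟨⟨F ⟨0, by omega⟩, funext fun i => hconst _ _⟩,
    fun j j' => (hlam j).trans (hlam j').symm, ?_⟩
  have hn0 : (n : ℝ) ≠ 0 := by
    have : n ≠ 0 := by omega
    exact_mod_cast this
  simp only [hlam, Finset.sum_const, Finset.card_univ, Fintype.card_fin, nsmul_eq_mul]
  field_simp
end

section
/- Let B be a symmetric transition matrix whose transition graph is connected and whose diagonal entries B_{ii} = ∑_{j≠i} μ_{ji} are all strictly positive, let v¹,…,vⁿ ∈ ℝ^d satisfy ∑_{i=1}^n v^i = 0 and span{v^i − v^j : i,j} = ℝ^d. Then for every ε₀ > 0 there exists θ > 0 such that for every k ∈ ℝ^d with |k| ≥ ε₀, every eigenvalue λ ∈ ℂ of the matrix i·diag(v^j·k) + B satisfies Re λ ≥ θ. -/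
/-- The symbol `i·diag(v^j·k) + B` of the hyperbolic system (up to sign), as a complex
matrix. -/
noncomputable def symbolMatrix {n d : ℕ} (μ : Fin n → Fin n → ℝ) (v : Fin n → Fin d → ℝ)
    (k : EuclideanSpace ℝ (Fin d)) : Matrix (Fin n) (Fin n) ℂ :=
  Complex.I • Matrix.diagonal (fun j => ((∑ l : Fin d, v j l * k l : ℝ) : ℂ))
    + (transMatrix μ).map (fun x : ℝ => (x : ℂ))

/-- The `ℓ²`-energy `∑ i j, μ i j |z i - z j|²` of the transition graph (each edge counted
twice). -/
noncomputable def energy {n : ℕ} (μ : Fin n → Fin n → ℝ) (z : Fin n → ℂ) : ℝ :=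
  ∑ i, ∑ j, μ i j * ‖z i - z j‖ ^ 2

theorem energy_term_le {n : ℕ} {μ : Fin n → Fin n → ℝ}
    (hnonneg : ∀ i j : Fin n, i ≠ j → 0 ≤ μ i j) (z : Fin n → ℂ) (i j : Fin n) :
    μ i j * ‖z i - z j‖ ^ 2 ≤ energy μ z := by
  have h : ∀ i j, 0 ≤ μ i j * ‖z i - z j‖ ^ 2 := by
    intro i j
    by_cases hij : i = j
    · simp [hij]
    · exact mul_nonneg (hnonneg i j hij) (sq_nonneg _)
  calc μ i j * ‖z i - z j‖ ^ 2 ≤ ∑ j, μ i j * ‖z i - z j‖ ^ 2 :=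
        Finset.single_le_sum (f := fun j => μ i j * ‖z i - z j‖ ^ 2)
          (fun j _ => h i j) (Finset.mem_univ j)
    _ ≤ energy μ z :=
        Finset.single_le_sum (f := fun i => ∑ j, μ i j * ‖z i - z j‖ ^ 2)
          (fun i _ => Finset.sum_nonneg fun j _ => h i j) (Finset.mem_univ i)

/-- Poincaré-type inequality: on a connected transition graph the energy controls the
oscillation. -/
theorem exists_osc_bound {n : ℕ} {μ : Fin n → Fin n → ℝ}
    (hnonneg : ∀ i j : Fin n, i ≠ j → 0 ≤ μ i j)
    (hsym : ∀ i j : Fin n, μ i j = μ j i)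
    (hconn : (transGraph μ).Connected) :
    ∃ C : ℝ, 0 ≤ C ∧ ∀ (z : Fin n → ℂ) (i j : Fin n), ‖z i - z j‖ ≤ C * √(energy μ z) := by
  have key : ∀ i j, ∃ C : ℝ, 0 ≤ C ∧ ∀ z : Fin n → ℂ, ‖z i - z j‖ ≤ C * √(energy μ z) := by
    intro i j
    obtain ⟨w⟩ := hconn.preconnected i j
    induction w with
    | nil => exact ⟨0, le_rfl, by simp⟩
    | @cons a b c hab _ ih =>
      obtain ⟨C, hC, hz⟩ := ih
      have hpos : 0 < μ a b := by
        have h := (SimpleGraph.fromRel_adj _ _ _).1 hab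
        rcases h.2 with h | h
        · exact h
        · rwa [hsym]
      refine ⟨√(μ a b)⁻¹ + C, by positivity, fun z => ?_⟩
      have h1 : ‖z a - z b‖ ≤ √(μ a b)⁻¹ * √(energy μ z) := by
        rw [← Real.sqrt_mul (by positivity)]
        apply Real.le_sqrt_of_sq_le
        rw [inv_mul_eq_div, le_div_iff₀ hpos, mul_comm]
        exact energy_term_le hnonneg z a b
      calc ‖z a - z c‖ ≤ ‖z a - z b‖ + ‖z b - z c‖ := norm_sub_le_norm_sub_add_norm_sub _ _ _
        _ ≤ _ := by rw [add_mul]; exact add_le_add h1 (hz z)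
  choose C hC hz using key
  refine ⟨∑ i, ∑ j, C i j, Finset.sum_nonneg fun i _ => Finset.sum_nonneg fun j _ => hC i j,
    fun z i j => (hz i j z).trans ?_⟩
  refine mul_le_mul_of_nonneg_right ?_ (Real.sqrt_nonneg _)
  calc C i j ≤ ∑ j, C i j := Finset.single_le_sum (fun j _ => hC i j) (Finset.mem_univ j)
    _ ≤ _ := Finset.single_le_sum (f := fun i => ∑ j, C i j)
        (fun i _ => Finset.sum_nonneg fun j _ => hC i j) (Finset.mem_univ i)

/-- `B` acts as the weighted graph Laplacian; the diagonal values `μ i i`, on which there is no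
assumption, do not contribute. -/
theorem transMatrix_map_mulVec {n : ℕ} {μ : Fin n → Fin n → ℝ}
    (hsym : ∀ i j : Fin n, μ i j = μ j i) (z : Fin n → ℂ) (i : Fin n) :
    ((transMatrix μ).map (fun x : ℝ => (x : ℂ))).mulVec z i
      = ∑ j, (μ i j : ℂ) * (z i - z j) := by
  simp only [Matrix.mulVec, dotProduct, Matrix.map_apply, transMatrix, Matrix.of_apply]
  rw [← Finset.add_sum_erase _ _ (Finset.mem_univ i),
    ← Finset.add_sum_erase (a := i) _ (fun j => (μ i j : ℂ) * (z i - z j)) (Finset.mem_univ i)]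
  have h : ∑ j ∈ Finset.univ.erase i,
      ((if i = j then ∑ k ∈ Finset.univ.erase i, μ k i else -μ i j : ℝ) : ℂ) * z j
      = ∑ j ∈ Finset.univ.erase i, -((μ i j : ℂ) * z j) := by
    refine Finset.sum_congr rfl fun j hj => ?_
    rw [if_neg (Finset.ne_of_mem_erase hj).symm]
    push_cast; ring
  rw [h]
  simp only [if_true, sub_self, mul_zero, zero_add, mul_sub, Finset.sum_sub_distrib,
    Finset.sum_neg_distrib, Complex.ofReal_sum, Finset.sum_mul]
  rw [← sub_eq_add_neg]
  congr 1
  exact Finset.sum_congr rfl fun j _ => by rw [hsym j i]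

/-- The real part of the eigenvalue equation paired with `z`: the skew-adjoint part `i·diag(a)`
drops out. -/
theorem two_mul_re_sum_eq_energy {n : ℕ} {μ : Fin n → Fin n → ℝ}
    (hsym : ∀ i j : Fin n, μ i j = μ j i) (a : Fin n → ℝ) (z : Fin n → ℂ) (lam : ℂ)
    (h : ∀ i, (lam - Complex.I * a i) * z i = ∑ j, (μ i j : ℂ) * (z i - z j)) :
    2 * (lam.re * ∑ i, ‖z i‖ ^ 2) = energy μ z := by
  have h1 : ∀ i, lam.re * ‖z i‖ ^ 2
      = ∑ j, μ i j * ((z i - z j).re * (z i).re + (z i - z j).im * (z i).im) := by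
    intro i
    have hre := congrArg Complex.re (h i)
    have him := congrArg Complex.im (h i)
    simp only [Complex.re_sum, Complex.im_sum,
      Complex.mul_re, Complex.mul_im, Complex.sub_re, Complex.sub_im, Complex.I_re, Complex.I_im,
      Complex.ofReal_re, Complex.ofReal_im, zero_mul,
      sub_zero, add_zero] at hre him
    simp only [mul_add, Finset.sum_add_distrib, ← mul_assoc, ← Finset.sum_mul,
      Complex.sub_re, Complex.sub_im]
    rw [← hre, ← him, ← Complex.normSq_eq_norm_sq, Complex.normSq_apply]
    ring
  have h2 : lam.re * ∑ i, ‖z i‖ ^ 2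
      = ∑ i, ∑ j, μ i j * ((z i - z j).re * (z i).re + (z i - z j).im * (z i).im) := by
    rw [Finset.mul_sum]
    exact Finset.sum_congr rfl fun i _ => h1 i
  -- symmetrise the double sum: average it with its copy in which `i` and `j` are swapped
  have h3 := h2.trans Finset.sum_comm
  rw [two_mul]
  nth_rewrite 1 [h2]
  rw [h3, energy, ← Finset.sum_add_distrib]
  refine Finset.sum_congr rfl fun i _ => ?_
  rw [← Finset.sum_add_distrib]
  refine Finset.sum_congr rfl fun j _ => ?_
  rw [hsym j i, ← Complex.normSq_eq_norm_sq, Complex.normSq_apply]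
  simp only [Complex.sub_re, Complex.sub_im]
  ring

/-- The span condition: the differences `(v i - v j) · k` control `k`. -/
theorem exists_freq_bound {n d : ℕ} {v : Fin n → Fin d → ℝ}
    (hspan : Submodule.span ℝ {x : Fin d → ℝ | ∃ i j : Fin n, x = v i - v j} = ⊤) :
    ∃ K : ℝ, 0 ≤ K ∧ ∀ (k : EuclideanSpace ℝ (Fin d)) (r : ℝ), 0 ≤ r →
      (∀ i j, |(∑ l, v i l * k l) - ∑ l, v j l * k l| ≤ r) → ‖k‖ ≤ K * r := by
  let L : EuclideanSpace ℝ (Fin d) →ₗ[ℝ] (Fin n × Fin n → ℝ) :=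
    { toFun := fun k p => (∑ l, v p.1 l * k l) - ∑ l, v p.2 l * k l
      map_add' := by
        intro x y; funext p
        simp only [PiLp.add_apply, Pi.add_apply, mul_add, Finset.sum_add_distrib]; ring
      map_smul' := by
        intro c x; funext p
        simp only [PiLp.smul_apply, Pi.smul_apply, smul_eq_mul, RingHom.id_apply, mul_sub,
          Finset.mul_sum]
        congr 1 <;> exact Finset.sum_congr rfl fun l _ => by ring }
  have hker : LinearMap.ker L = ⊥ := by
    rw [LinearMap.ker_eq_bot']
    intro k hk
    -- pairing with `k` vanishes on the spanning set, hence everywhere, in particular at `k`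
    let f : (Fin d → ℝ) →ₗ[ℝ] ℝ := ∑ l, k l • LinearMap.proj l
    have hf : ∀ x, f x = ∑ l, k l * x l := by intro x; simp [f]
    have h0 : f = 0 := by
      refine LinearMap.ext_on hspan ?_
      rintro x ⟨i, j, rfl⟩
      have := congrFun hk (i, j)
      rw [hf, LinearMap.zero_apply]
      simp only [Pi.sub_apply, mul_sub, Finset.sum_sub_distrib]
      simpa [L, mul_comm] using this
    have h1 : ∑ l, k l * k l = 0 := by rw [← hf, h0, LinearMap.zero_apply]
    ext l
    have h2 := (Finset.sum_eq_zero_iff_of_nonneg (fun l _ => mul_self_nonneg (k l))).1 h1 l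
      (Finset.mem_univ l)
    simpa using h2
  obtain ⟨K, -, hK⟩ := L.exists_antilipschitzWith hker
  refine ⟨K, K.2, fun k r hr h => ?_⟩
  have h1 := hK.le_mul_dist k 0
  rw [map_zero, dist_zero_right, dist_zero_right] at h1
  refine h1.trans (mul_le_mul_of_nonneg_left ?_ K.2)
  exact (pi_norm_le_iff_of_nonneg hr).2 fun p => h p.1 p.2

/-- An eigenvector normalised to have an entry `1` of maximal modulus, with the eigenvalue
equation written out entrywise. -/
theorem exists_normalized_eigenvector {n d : ℕ} {μ : Fin n → Fin n → ℝ}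
    (hn : 0 < n) (hsym : ∀ i j : Fin n, μ i j = μ j i) {v : Fin n → Fin d → ℝ}
    {k : EuclideanSpace ℝ (Fin d)} {lam : ℂ} (hlam : lam ∈ spectrum ℂ (symbolMatrix μ v k)) :
    ∃ (z : Fin n → ℂ) (m : Fin n), z m = 1 ∧ (∀ i, ‖z i‖ ≤ 1) ∧
      ∀ i, (lam - Complex.I * (∑ l, v i l * k l : ℝ)) * z i
        = ∑ j, (μ i j : ℂ) * (z i - z j) := by
  rw [← Matrix.spectrum_toLin', ← Module.End.hasEigenvalue_iff_mem_spectrum] at hlam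
  obtain ⟨w, hw⟩ := hlam.exists_hasEigenvector
  have hw0 := hw.2
  have heq := hw.apply_eq_smul
  rw [Matrix.toLin'_apply] at heq
  have : Nonempty (Fin n) := ⟨⟨0, hn⟩⟩
  obtain ⟨m, hm⟩ := Finite.exists_max fun i => ‖w i‖
  have hm0 : w m ≠ 0 := by
    intro h0
    apply hw0
    funext i
    have := hm i
    rw [h0, norm_zero] at this
    simpa using this
  refine ⟨fun i => w i / w m, m, div_self hm0, fun i => ?_, fun i => ?_⟩
  · rw [norm_div]
    exact (div_le_one (norm_pos_iff.2 hm0)).2 (hm i)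
  · have hi := congrFun heq i
    rw [symbolMatrix, Matrix.add_mulVec, Pi.add_apply, transMatrix_map_mulVec hsym,
      Matrix.smul_mulVec, Pi.smul_apply, Matrix.mulVec_diagonal, Pi.smul_apply, smul_eq_mul,
      smul_eq_mul] at hi
    have h2 : ∑ j, (μ i j : ℂ) * (w i / w m - w j / w m)
        = (∑ j, (μ i j : ℂ) * (w i - w j)) / w m := by
      rw [Finset.sum_div]
      exact Finset.sum_congr rfl fun j _ => by ring
    rw [h2, ← mul_div_assoc]
    congr 1
    linear_combination -hi

/-- under connectedness, strict positivity of the diagonal of `B`, zero mean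
of the speeds and the span condition, for every `ε₀ > 0` there is `θ > 0` such that every
eigenvalue `λ` of `i·diag(v^j·k) + B` with `|k| ≥ ε₀` satisfies `Re λ ≥ θ`. -/
theorem uniform_spectral_gap (n d : ℕ) (hn : 2 ≤ n) (μ : Fin n → Fin n → ℝ)
    (hnonneg : ∀ i j : Fin n, i ≠ j → 0 ≤ μ i j)
    (hsym : ∀ i j : Fin n, i ≠ j → μ i j = μ j i)
    (hconn : (transGraph μ).Connected)
    (hdiag : ∀ i : Fin n, 0 < ∑ j ∈ Finset.univ.erase i, μ j i)
    (v : Fin n → Fin d → ℝ)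
    (hv : ∑ i : Fin n, v i = 0)
    (hspan : Submodule.span ℝ {x : Fin d → ℝ | ∃ i j : Fin n, x = v i - v j} = ⊤) :
    ∀ ε₀ : ℝ, 0 < ε₀ → ∃ θ : ℝ, 0 < θ ∧
      ∀ k : EuclideanSpace ℝ (Fin d), ε₀ ≤ ‖k‖ →
        ∀ lam ∈ spectrum ℂ (symbolMatrix μ v k), θ ≤ lam.re := by
  intro ε₀ hε
  have hs : ∀ i j : Fin n, μ i j = μ j i := by
    intro i j
    by_cases h : i = j
    · rw [h]
    · exact hsym i j h
  obtain ⟨C, hC, hosc⟩ := exists_osc_bound hnonneg hs hconn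
  obtain ⟨K, hK, hfreq⟩ := exists_freq_bound hspan
  obtain ⟨M, hM, hMle⟩ : ∃ M : ℝ, 0 ≤ M ∧ ∀ i, ∑ j, |μ i j| ≤ M :=
    ⟨∑ i, ∑ j, |μ i j|, by positivity, fun i =>
      Finset.single_le_sum (f := fun i => ∑ j, |μ i j|) (fun i _ => by positivity)
        (Finset.mem_univ i)⟩
  -- `s` bounds the root of the energy: the first condition keeps every `|z i|` above `1/2`, the
  -- second makes the resulting bound on `|k|` smaller than `ε₀`
  obtain ⟨s, hs0, hs1, hs2⟩ : ∃ s : ℝ, 0 < s ∧ C * s ≤ 1 / 2 ∧ K * (4 * (M * (C * s))) < ε₀ := by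
    have ht : 0 ≤ K * (4 * (M * C)) := by positivity
    refine ⟨min (1 / (2 * (C + 1))) (ε₀ / (K * (4 * (M * C)) + 1)), by positivity, ?_, ?_⟩
    · calc C * _ ≤ C * (1 / (2 * (C + 1))) := mul_le_mul_of_nonneg_left (min_le_left _ _) hC
        _ ≤ 1 / 2 := by
          rw [mul_one_div, div_le_iff₀ (by positivity)]
          linarith
    · calc K * (4 * (M * (C * _)))
          = (K * (4 * (M * C))) * min (1 / (2 * (C + 1))) (ε₀ / (K * (4 * (M * C)) + 1)) := by ring
        _ ≤ (K * (4 * (M * C))) * (ε₀ / (K * (4 * (M * C)) + 1)) :=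
          mul_le_mul_of_nonneg_left (min_le_right _ _) ht
        _ < ε₀ := by
          rw [← mul_div_assoc, div_lt_iff₀ (by positivity)]
          linarith
  have hn0 : (0 : ℝ) < n := by exact_mod_cast (by omega : 0 < n)
  refine ⟨s ^ 2 / (2 * n), by positivity, fun k hk lam hlam => ?_⟩
  by_contra! hlt
  obtain ⟨z, m, hzm, hz1, heq⟩ := exists_normalized_eigenvector (by omega) hs hlam
  have hE := two_mul_re_sum_eq_energy hs _ z lam heq
  have hEs : √(energy μ z) ≤ s := by
    apply Real.sqrt_le_iff.2 ⟨hs0.le, ?_⟩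
    have hS0 : 0 ≤ ∑ i, ‖z i‖ ^ 2 := by positivity
    have hSn : ∑ i, ‖z i‖ ^ 2 ≤ n := by
      calc ∑ i, ‖z i‖ ^ 2 ≤ ∑ _i : Fin n, (1 : ℝ) :=
            Finset.sum_le_sum fun i _ => pow_le_one₀ (norm_nonneg _) (hz1 i)
        _ = n := by simp
    calc energy μ z = 2 * (lam.re * ∑ i, ‖z i‖ ^ 2) := hE.symm
      _ ≤ 2 * (s ^ 2 / (2 * n) * ∑ i, ‖z i‖ ^ 2) := by gcongr
      _ ≤ 2 * (s ^ 2 / (2 * n) * n) := by gcongr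
      _ = s ^ 2 := by field_simp
  have hdiff : ∀ i j, ‖z i - z j‖ ≤ C * s := fun i j =>
    (hosc z i j).trans (mul_le_mul_of_nonneg_left hEs hC)
  have hlow : ∀ i, 1 / 2 ≤ ‖z i‖ := by
    intro i
    have h1 := norm_sub_norm_le (z m) (z i)
    have h2 := hdiff m i
    rw [hzm, norm_one] at h1
    rw [hzm] at h2
    linarith
  have hclose : ∀ i, ‖lam - Complex.I * (∑ l, v i l * k l : ℝ)‖ ≤ 2 * (M * (C * s)) := by
    intro i
    have h1 : ‖∑ j, (μ i j : ℂ) * (z i - z j)‖ ≤ M * (C * s) := by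
      calc ‖∑ j, (μ i j : ℂ) * (z i - z j)‖ ≤ ∑ j, |μ i j| * (C * s) := by
            refine norm_sum_le_of_le _ fun j _ => ?_
            rw [norm_mul, Complex.norm_real, Real.norm_eq_abs]
            exact mul_le_mul_of_nonneg_left (hdiff i j) (abs_nonneg _)
        _ ≤ M * (C * s) := by
            rw [← Finset.sum_mul]
            exact mul_le_mul_of_nonneg_right (hMle i) (by positivity)
    rw [← heq i, norm_mul] at h1
    have h2 := mul_le_mul_of_nonneg_left (hlow i)
      (norm_nonneg (lam - Complex.I * (∑ l, v i l * k l : ℝ)))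
    linarith
  have hsmall : ‖k‖ ≤ K * (4 * (M * (C * s))) := by
    refine hfreq k _ (by positivity) fun i j => ?_
    have him : ∀ i, |lam.im - ∑ l, v i l * k l| ≤ 2 * (M * (C * s)) := by
      intro i
      have h := (Complex.abs_im_le_norm _).trans (hclose i)
      rwa [Complex.sub_im, Complex.I_mul_im, Complex.ofReal_re] at h
    have hi := abs_le.1 (him i)
    have hj := abs_le.1 (him j)
    exact abs_le.2 ⟨by linarith [hi.2, hj.1], by linarith [hi.1, hj.2]⟩
  linarith
end

section
/- Let n ≥ 3 and let the transition rates be those of a cycle: μ_{j,j+1} = μ_{j+1,j} > 0 for j = 1,…,n−1 and μ_{n,1} = μ_{1,n} > 0, with all other μ_{ij} = 0. Then for every i ∈ {1,…,n}, det B(i) = ∑_{j=1}^n ∏_{m ∈ {1,…,n}, m ≠ j} μ_{m,m+1}, where indices are taken cyclically (μ_{n,n+1} := μ_{n,1}); equivalently, det B(i) = ∑_{j=1}^n (μ_{1,2} μ_{2,3} ⋯ μ_{n−1,n} μ_{n,1}) / μ_{j,j+1}. -/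
/-- The cyclic transition rates: `μ_{j,j+1} = w j` (indices mod `n`), all other rates zero. -/
noncomputable def cycleRates {n : ℕ} [NeZero n] (w : Fin n → ℝ) : Fin n → Fin n → ℝ :=
  fun i j => if j = i + 1 then w i else if i = j + 1 then w j else 0

section

open Matrix Finset

/-- Entries of the transition matrix of a cycle. The assumption `3 ≤ n` makes `a + 1` and `a - 1`
distinct, so that the two edges at a vertex lead to different neighbours. -/
theorem transMatrix_cycleRates (n : ℕ) [NeZero n] (hn : 3 ≤ n) (w : Fin n → ℝ) (a b : Fin n) :
    transMatrix (cycleRates w) a b =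
      if a = b then w a + w (a - 1) else
        if b = a + 1 then -w a else if a = b + 1 then -w b else 0 := by
  obtain ⟨m, rfl⟩ : ∃ m, n = m + 3 := ⟨n - 3, by omega⟩
  have h2 : (1 : Fin (m+3)) + 1 ≠ 0 := by
    intro h
    have := congrArg Fin.val h
    simp only [Fin.val_add, Fin.val_one, Fin.val_zero] at this
    rw [Nat.mod_eq_of_lt (by omega)] at this
    omega
  have h3 (x : Fin (m + 3)) : x ≠ x + 1 + 1 := by
    rw [add_assoc]
    simpa using h2
  simp only [transMatrix, Matrix.of_apply]
  split_ifs with h h' h'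
  · have hs : ∀ k ∈ univ.erase a, cycleRates w k a =
        (if k = a + 1 then w a else 0) + (if k = a - 1 then w (a - 1) else 0) := by
      intro k _
      unfold cycleRates
      have e1 : a = k + 1 ↔ k = a - 1 := by grind
      have e2 : ¬ (k = a + 1 ∧ k = a - 1) := by
        rintro ⟨hk, hk'⟩
        apply h2
        have : a + 1 + 1 = a := by rw [← hk, hk']; simp
        rw [add_assoc] at this
        simpa using this
      by_cases c : k = a - 1
      · have : k ≠ a + 1 := fun h => e2 ⟨h, c⟩
        simp_all
      · have : ¬ a = k + 1 := by rwa [e1]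
        simp [c, this]
    rw [sum_congr rfl hs, sum_add_distrib]
    simp
  · simp [cycleRates, h']
  · simp [cycleRates, h', h3]
  · simp only [cycleRates, if_neg h', if_neg ‹¬b = a + 1›, neg_zero]

/-- The tridiagonal matrix left from a weighted cycle on `m + 1` vertices when one vertex is
deleted: row `k` is the `(k + 1)`-st vertex after the deleted one, and it is joined to its
predecessor by an edge of weight `v k` and to its successor by an edge of weight `v (k + 1)`.
The edges of weights `v 0` and `v m` lead to the deleted vertex. -/
def pathMat (m : ℕ) (v : ℕ → ℝ) : Matrix (Fin m) (Fin m) ℝ :=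
  Matrix.of fun k l => if k = l then v k + v (k + 1) else
    if (l : ℕ) = k + 1 then -v l else if (k : ℕ) = l + 1 then -v k else 0

/-- The incidence matrix of the path, with the deleted vertex as starting point: row `k` is the
linear form `x k - x (k - 1)` of the edge of weight `v k`, where `x (-1)` is read as `0`. -/
def incMat (m : ℕ) : Matrix (Fin m) (Fin m) ℝ :=
  Matrix.of fun k l => (if (k : ℕ) = l then 1 else 0) - (if (k : ℕ) = l + 1 then 1 else 0)

theorem det_incMat (m : ℕ) : (incMat m).det = 1 := by
  rw [Matrix.det_of_isLowerTriangular]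
  · simp [incMat]
  · intro k l h
    have h : k < l := h
    simp only [incMat, Matrix.of_apply]
    rw [if_neg (by omega), if_neg (by omega)]; simp

/-- The factorization `Dᵀ * (diagonal v + v m • 1 1ᵀ) * D`. As a quadratic form, the left-hand side
is `∑ k < m, v k * (x k - x (k - 1)) ^ 2 + v m * x (m - 1) ^ 2`, and `x (m - 1)` is the telescoping
sum of the differences `x k - x (k - 1)`, which accounts for the rank-one term. -/
theorem pathMat_eq (m : ℕ) (v : ℕ → ℝ) :
    pathMat m v = (incMat m)ᵀ * (diagonal (fun k : Fin m => v k) +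
      vecMulVec (fun _ => v m) (fun _ => 1)) * incMat m := by
  -- The telescoping sum: `1ᵀ * D` is the last coordinate form.
  have hcol : ∀ l : Fin m, ∑ k, incMat m k l = if (l : ℕ) + 1 = m then 1 else 0 := by
    intro l
    simp only [incMat, Matrix.of_apply]
    rw [Fin.sum_univ_eq_sum_range (fun k : ℕ =>
      ((if k = (l : ℕ) then (1 : ℝ) else 0) - (if k = l + 1 then 1 else 0)))]
    simp only [sum_sub_distrib, sum_ite_eq', mem_range]
    grind
  ext a b
  rw [mul_add, add_mul, Matrix.add_apply]
  have h2 : ((incMat m)ᵀ * vecMulVec (fun _ : Fin m => v m) (fun _ : Fin m => (1 : ℝ)) * incMat m) a b =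
      v m * ((∑ k, incMat m k a) * ∑ k, incMat m k b) := by
    rw [Matrix.mul_vecMulVec, Matrix.vecMulVec_mul, vecMulVec_apply]
    simp only [mulVec, vecMul, dotProduct, transpose_apply, one_mul, ← sum_mul]
    ring
  have h1 : ((incMat m)ᵀ * diagonal (fun k : Fin m => v k) * incMat m) a b =
      ∑ k ∈ range m, ((if k = (a : ℕ) then (1 : ℝ) else 0) - (if k = a + 1 then 1 else 0)) * v k *
        ((if k = (b : ℕ) then (1 : ℝ) else 0) - (if k = b + 1 then 1 else 0)) := by
    rw [Matrix.mul_apply, ← Fin.sum_univ_eq_sum_range (fun k : ℕ =>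
      ((if k = (a : ℕ) then (1 : ℝ) else 0) - (if k = a + 1 then 1 else 0)) * v k *
        ((if k = (b : ℕ) then (1 : ℝ) else 0) - (if k = b + 1 then 1 else 0)))]
    simp [Matrix.mul_diagonal, incMat]
  rw [h1, h2, hcol, hcol]
  simp only [sub_mul, ite_mul, one_mul, zero_mul, sum_sub_distrib, sum_ite_eq', mem_range]
  simp only [pathMat, Matrix.of_apply, Fin.ext_iff]
  grind

theorem det_pathMat (m : ℕ) (v : ℕ → ℝ) (hv : ∀ k, 0 < v k) :
    (pathMat m v).det = ∑ j ∈ range (m + 1), (∏ k ∈ range (m + 1), v k) / v j := by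
  have hd : IsUnit (diagonal (fun k : Fin m => v k)).det := by
    rw [det_diagonal]
    exact (prod_ne_zero_iff.2 fun (k : Fin m) _ => (hv k).ne').isUnit
  rw [pathMat_eq, det_mul, det_mul, det_transpose, det_incMat, one_mul, mul_one,
    vecMulVec_eq Unit, det_add_replicateCol_mul_replicateRow hd, det_diagonal]
  have hi : (diagonal (fun k : Fin m => v k))⁻¹ = diagonal (fun k : Fin m => (v k)⁻¹) := by
    apply inv_eq_left_inv
    simp [diagonal_mul_diagonal, (hv _).ne']
  rw [hi, det_unique]
  rw [Matrix.add_apply, one_apply_eq, Matrix.mul_apply]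
  simp only [mul_diagonal, replicateRow_apply, replicateCol_apply, one_mul]
  rw [Fin.prod_univ_eq_prod_range v m, Fin.sum_univ_eq_sum_range (fun k => (v k)⁻¹ * v m) m,
    sum_range_succ, prod_range_succ]
  have := (hv m).ne'
  simp only [div_eq_mul_inv, ← sum_mul, ← mul_sum]
  field_simp
  ring

/-- The quotient form of the minor: numbering the remaining vertices as `i + 1, i + 2, …` turns the
submatrix into `pathMat` for the rotated weights `k ↦ w (i + k)`, and the resulting sum is invariant
under the rotation. -/
theorem pminor_eq (n : ℕ) [NeZero n] (hn : 3 ≤ n) (w : Fin n → ℝ) (hw : ∀ j, 0 < w j) (i : Fin n) :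
      pminor (transMatrix (cycleRates w)) {i}
          = ∑ j : Fin n, (∏ m : Fin n, w m) / w j := by
  obtain ⟨m, rfl⟩ : ∃ m, n = m + 1 := ⟨n - 1, by omega⟩
  let f : Fin m → {j : Fin (m + 1) // j ∉ ({i} : Finset (Fin (m + 1)))} :=
    fun k => ⟨i + k.succ, by simp⟩
  have hf : Function.Bijective f := by
    rw [Fintype.bijective_iff_injective_and_card]
    refine ⟨fun k l h => ?_, ?_⟩
    · simpa [f] using h
    · simp 
  let e := Equiv.ofBijective f hf
  let v : ℕ → ℝ := fun k => w (i + Fin.ofNat (m + 1) k)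
  have hvv : ∀ k : Fin (m + 1), v k = w (i + k) := by
    intro k; simp [v]
  have hs (k : Fin m) : k.castSucc + 1 = k.succ := by simp
  have key : ((transMatrix (cycleRates w)).submatrix
      (fun j : {j // j ∉ ({i} : Finset (Fin (m + 1)))} => (j : Fin (m + 1)))
      (fun j : {j // j ∉ ({i} : Finset (Fin (m + 1)))} => (j : Fin (m + 1)))).submatrix e e =
        pathMat m v := by
    ext k l
    have hstep (k l : Fin m) : l.succ = k.succ + 1 ↔ (l : ℕ) = k + 1 := by
      rw [Fin.ext_iff, Fin.val_add_one]
      split_ifs with h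
      · have := congrArg Fin.val h
        simp at this ⊢
        omega
      · simp
    have h1 : v k = w (i + k.succ - 1) := by
      rw [← hs, ← add_assoc, add_sub_cancel_right, ← hvv]; simp
    have h2 (k : Fin m) : v (k + 1) = w (i + k.succ) := by
      rw [← hvv]; simp
    simp only [submatrix_apply, transMatrix_cycleRates _ hn, pathMat, Matrix.of_apply, e,
      Equiv.ofBijective_apply, f, add_right_inj, Fin.succ_inj, add_assoc, hstep]
    split_ifs with c1 c2 c3
    · rw [h1, h2, add_comm]
    · rw [c2, h2]
    · rw [c3, h2]
    · rfl
  rw [pminor, ← det_submatrix_equiv_self e, key, det_pathMat m v fun k => hw _,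
    ← Fin.sum_univ_eq_sum_range (fun j => (∏ k ∈ range (m + 1), v k) / v j),
    ← Fin.prod_univ_eq_prod_range]
  simp only [hvv]
  have hp : ∏ k, w (i + k) = ∏ k, w k := Equiv.prod_comp (Equiv.addLeft i) w
  rw [hp]
  exact Equiv.sum_comp (Equiv.addLeft i) fun j => (∏ m, w m) / w j

end

/-- for the cycle graph with `n ≥ 3` and positive weights `w j = μ_{j,j+1}`
(cyclically), every first-order principal minor of the transition matrix equals
`∑_j ∏_{m ≠ j} μ_{m,m+1}`, i.e. `∑_j (μ_{1,2} ⋯ μ_{n,1}) / μ_{j,j+1}`. -/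
theorem cycle_minor (n : ℕ) [NeZero n] (hn : 3 ≤ n) (w : Fin n → ℝ) (hw : ∀ j, 0 < w j) :
    ∀ i : Fin n,
      pminor (transMatrix (cycleRates w)) {i}
          = ∑ j : Fin n, ∏ m ∈ Finset.univ.erase j, w m ∧
      pminor (transMatrix (cycleRates w)) {i}
          = ∑ j : Fin n, (∏ m : Fin n, w m) / w j := by
  intro i
  have h := pminor_eq n hn w hw i
  refine ⟨h.trans (Finset.sum_congr rfl fun j _ => ?_), h⟩
  rw [← Finset.mul_prod_erase _ w (Finset.mem_univ j), mul_div_cancel_left₀ _ (hw j).ne']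
end
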